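/- arXiv:1206.1472 — 3 statements merged into one kernel-verified Lean document; each statement's English description precedes it below -/
import Mathlib

section
/- (Central Limit Theorem for quantum measurement records.) Let M_1,…,M_n be k×k complex matrices with Σ_{i=1}^n M_i^* M_i = I, and assume the quantum channel L(ρ) = Σ_{i=1}^n M_i ρ M_i^* admits a unique invariant state ρ_∞. Let (ρ_t, X_t)_{t≥1} be the associated quantum trajectory: adapted to a filtration (F_t), with ρ_t a density matrix and X_t ∈ {e_1,…,e_n} ⊂ ℝ^n, such that P(X_{t+1} = e_i | F_t) = Tr(M_i ρ_t M_i^*) and, almost surely on {X_{t+1} = e_i}, ρ_{t+1} = M_i ρ_t M_i^* / Tr(M_i ρ_t M_i^*). Set S_t = Σ_{s=1}^t X_s, m = Σ_{i=1}^n Tr(M_i ρ_∞ M_i^*) e_i ∈ ℝ^n, and for i = 1,…,n let L_i solve L_i − L^*(L_i) = M_i^* M_i − m_i I where L^*(X) = Σ_{j=1}^n M_j^* X M_j. Then S_t/t → m almost surely, and (S_t − t m)/√t converges in distribution to the Gaussian N(0, C) on ℝ^n with C_{ij} = δ_{ij} Tr(M_i ρ_∞ M_i^*) − m_i m_j + (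 Tr(M_i ρ_∞ M_i^* L_j) + Tr(M_j ρ_∞ M_j^* L_i) ) − ( m_i Tr(ρ_∞ L_j) + m_j Tr(ρ_∞ L_i) ) (real parts of traces being understood), this matrix being symmetric positive semidefinite. -/
open MeasureTheory Filter Matrix Finset
open scoped ComplexOrder

noncomputable section

instance {k : ℕ} : MeasurableSpace (Matrix (Fin k) (Fin k) ℂ) := MeasurableSpace.pi

/-- A density matrix: positive semidefinite with trace one. -/
def IsDensity {k : ℕ} (ρ : Matrix (Fin k) (Fin k) ℂ) : Prop := ρ.PosSemidef ∧ ρ.trace = 1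

/-- The quantum trajectory of the repeated measurement scheme for the quantum channel
with Kraus operators `M₁, …, Mₙ`: `Y_{t+1} = i` (outcome `e_i`) with conditional
probability `Tr(M_i ρ_t M_i^*)`, the state being updated by wave-packet reduction. -/
structure IsMeasTraj {k n : ℕ} {Ω : Type} {mΩ : MeasurableSpace Ω}
    (Mk : Fin n → Matrix (Fin k) (Fin k) ℂ)
    (μ : Measure Ω) (ℱ : Filtration ℕ mΩ)
    (ρ : ℕ → Ω → Matrix (Fin k) (Fin k) ℂ)
    (Y : ℕ → Ω → Fin n) : Prop where
  density : ∀ t, ∀ᵐ ω ∂μ, IsDensity (ρ t ω)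
  adapted_ρ : ∀ t, Measurable[ℱ t] (ρ t)
  adapted_Y : ∀ t, Measurable[ℱ t] (Y t)
  prob : ∀ (t : ℕ) (i : Fin n),
    μ[(fun ω => if Y (t + 1) ω = i then (1 : ℝ) else 0) | ℱ t]
      =ᵐ[μ] fun ω => ((Mk i * ρ t ω * (Mk i)ᴴ).trace).re
  update : ∀ (t : ℕ) (i : Fin n), ∀ᵐ ω ∂μ,
    Y (t + 1) ω = i →
      ρ (t + 1) ω = ((Mk i * ρ t ω * (Mk i)ᴴ).trace)⁻¹ • (Mk i * ρ t ω * (Mk i)ᴴ)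

/-- The drift vector `m = Σ_i Tr(M_i ρ_∞ M_i^*) e_i ∈ ℝ^n`. -/
def mrec {k n : ℕ} (Mk : Fin n → Matrix (Fin k) (Fin k) ℂ)
    (ρinf : Matrix (Fin k) (Fin k) ℂ) : Fin n → ℝ :=
  fun i => ((Mk i * ρinf * (Mk i)ᴴ).trace).re

/-- The covariance matrix of the CLT for quantum measurement records. -/
def Crec {k n : ℕ} (Mk : Fin n → Matrix (Fin k) (Fin k) ℂ)
    (ρinf : Matrix (Fin k) (Fin k) ℂ) (LL : Fin n → Matrix (Fin k) (Fin k) ℂ)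
    (i j : Fin n) : ℝ :=
  (if i = j then ((Mk i * ρinf * (Mk i)ᴴ).trace).re else 0)
    - mrec Mk ρinf i * mrec Mk ρinf j
    + (((Mk i * ρinf * (Mk i)ᴴ * LL j).trace).re
      + ((Mk j * ρinf * (Mk j)ᴴ * LL i).trace).re)
    - (mrec Mk ρinf i * ((ρinf * LL j).trace).re
      + mrec Mk ρinf j * ((ρinf * LL i).trace).re)

/-!
The Poisson equations for the `L_i` turn `∑ i, l_i (S_t,i - t m_i)` into a sum of bounded martingale
differences `D_s` up to a bounded error. The strong law for bounded martingale differences shows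
that every cluster point of the time averages of `ρ_s` is an invariant state, so by compactness of
the set of density matrices and uniqueness these averages converge almost surely to `ρ_∞`. This
gives both the law of large numbers and the almost sure convergence of `(∑ s, D_s ^ 2) / t` to the
quadratic form of `C` at `l`, which is therefore nonnegative. With the `D_s` rescaled by `√t`, the
mean of `exp (i ∑ D + ½ ∑ D²)` tends to `1`, which identifies the limit of the characteristic
function; Lévy's continuity theorem concludes.
-/

/-! ### Bounded martingale differences -/

section MartingaleDifferences

variable {Ω : Type*} {mΩ : MeasurableSpace Ω} {μ : Measure Ω}

lemma ae_tendsto_zero_of_summable_integral_norm {E : Type*} [NormedAddCommGroup E]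
    {f : ℕ → Ω → E} (hf : ∀ j, Integrable (f j) μ)
    (hsum : Summable fun j => ∫ ω, ‖f j ω‖ ∂μ) :
    ∀ᵐ ω ∂μ, Tendsto (fun j => f j ω) atTop (nhds 0) := by
  have hmeas : ∀ j, AEMeasurable (fun ω => ‖f j ω‖ₑ) μ := fun j => (hf j).1.enorm
  have hlintegral : ∫⁻ ω, ∑' j, ‖f j ω‖ₑ ∂μ ≠ ⊤ := by
    rw [lintegral_tsum hmeas]
    simp_rw [← fun j => ofReal_integral_norm_eq_lintegral_enorm (hf j)]
    exact hsum.tsum_ofReal_ne_top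
  filter_upwards [ae_lt_top' (AEMeasurable.tsum hmeas) hlintegral] with ω hω
  exact tendsto_zero_iff_enorm_tendsto_zero.2
    (ENNReal.tendsto_atTop_zero_of_tsum_ne_top hω.ne)

/-- Martingale differences `D 0, D 1, …` adapted to `ℱ` and almost surely bounded by `K`. The
index is that of the conditioning: `D s` is the increment from time `s` to time `s + 1`. -/
structure IsBddMartingaleDiff (μ : Measure Ω) (ℱ : Filtration ℕ mΩ)
    (D : ℕ → Ω → ℝ) (K : ℝ) : Prop where
  measurable_succ : ∀ s, Measurable[ℱ (s + 1)] (D s)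
  abs_le : ∀ s, ∀ᵐ ω ∂μ, |D s ω| ≤ K
  condExp_eq_zero : ∀ s, μ[D s | ℱ s] =ᵐ[μ] 0

namespace IsBddMartingaleDiff

variable {ℱ : Filtration ℕ mΩ} {D : ℕ → Ω → ℝ} {K : ℝ}

lemma measurable (h : IsBddMartingaleDiff μ ℱ D K) (s : ℕ) : Measurable (D s) :=
  (h.measurable_succ s).mono (ℱ.le _) le_rfl

lemma measurable_of_lt (h : IsBddMartingaleDiff μ ℱ D K) {s t : ℕ} (hst : s < t) :
    Measurable[ℱ t] (D s) :=
  (h.measurable_succ s).mono (ℱ.mono hst) le_rfl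

lemma measurable_sum (h : IsBddMartingaleDiff μ ℱ D K) (t : ℕ) :
    Measurable[ℱ t] fun ω => ∑ s ∈ range t, D s ω :=
  Finset.measurable_fun_sum _ fun _ hs => h.measurable_of_lt (mem_range.1 hs)

lemma measurable_sum_sq (h : IsBddMartingaleDiff μ ℱ D K) (t : ℕ) :
    Measurable[ℱ t] fun ω => ∑ s ∈ range t, D s ω ^ 2 :=
  Finset.measurable_fun_sum _ fun _ hs => (h.measurable_of_lt (mem_range.1 hs)).pow_const 2

lemma ae_abs_le (h : IsBddMartingaleDiff μ ℱ D K) : ∀ᵐ ω ∂μ, ∀ s, |D s ω| ≤ K :=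
  ae_all_iff.2 h.abs_le

lemma ae_abs_sum_le (h : IsBddMartingaleDiff μ ℱ D K) (t : ℕ) :
    ∀ᵐ ω ∂μ, |∑ s ∈ range t, D s ω| ≤ t * K := by
  filter_upwards [h.ae_abs_le] with ω hω
  calc |∑ s ∈ range t, D s ω| ≤ ∑ s ∈ range t, |D s ω| := abs_sum_le_sum_abs _ _
    _ ≤ ∑ _s ∈ range t, K := sum_le_sum fun s _ => hω s
    _ = t * K := by simp

lemma ae_sum_sq_le (h : IsBddMartingaleDiff μ ℱ D K) (t : ℕ) :
    ∀ᵐ ω ∂μ, ∑ s ∈ range t, D s ω ^ 2 ≤ t * K ^ 2 := by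
  filter_upwards [h.ae_abs_le] with ω hω
  calc ∑ s ∈ range t, D s ω ^ 2 ≤ ∑ _s ∈ range t, K ^ 2 :=
        sum_le_sum fun s _ => sq_le_sq.2 ((hω s).trans (le_abs_self K))
    _ = t * K ^ 2 := by simp

lemma nonneg [NeZero μ] (h : IsBddMartingaleDiff μ ℱ D K) : 0 ≤ K := by
  obtain ⟨ω, hω⟩ := (h.abs_le 0).exists
  exact (abs_nonneg _).trans hω

lemma const_mul (h : IsBddMartingaleDiff μ ℱ D K) (c : ℝ) :
    IsBddMartingaleDiff μ ℱ (fun s ω => c * D s ω) (|c| * K) where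
  measurable_succ s := (h.measurable_succ s).const_mul c
  abs_le s := by
    filter_upwards [h.abs_le s] with ω hω
    rw [abs_mul]
    gcongr
  condExp_eq_zero s := by
    filter_upwards [condExp_smul c (D s) (ℱ s), h.condExp_eq_zero s] with ω hsmul hzero
    exact hsmul.trans (by simp [hzero])

variable [IsFiniteMeasure μ]

lemma integrable (h : IsBddMartingaleDiff μ ℱ D K) (s : ℕ) : Integrable (D s) μ :=
  Integrable.of_bound (h.measurable s).aestronglyMeasurable K (h.abs_le s)

lemma integrable_smul {E : Type*} [NormedAddCommGroup E] [NormedSpace ℝ E]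
    (h : IsBddMartingaleDiff μ ℱ D K) (s : ℕ) {Z : Ω → E} (hZ : AEStronglyMeasurable Z μ)
    {C : ℝ} (hC : ∀ᵐ ω ∂μ, ‖Z ω‖ ≤ C) : Integrable (D s • Z) μ :=
  (h.integrable s).smul_bdd C hZ hC

lemma condExp_smul_eq_zero {E : Type*} [NormedAddCommGroup E] [NormedSpace ℝ E]
    [CompleteSpace E] (h : IsBddMartingaleDiff μ ℱ D K) (s : ℕ) {Z : Ω → E}
    (hZ : StronglyMeasurable[ℱ s] Z) {C : ℝ} (hC : ∀ᵐ ω ∂μ, ‖Z ω‖ ≤ C) :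
    μ[D s • Z | ℱ s] =ᵐ[μ] 0 := by
  have hint := h.integrable_smul s (hZ.mono (ℱ.le s)).aestronglyMeasurable hC
  filter_upwards [condExp_smul_of_aestronglyMeasurable_right (h.integrable s) hint
    hZ.aestronglyMeasurable, h.condExp_eq_zero s] with ω hpull hzero
  simp [hpull, hzero]

lemma integral_smul_eq_zero {E : Type*} [NormedAddCommGroup E] [NormedSpace ℝ E]
    [CompleteSpace E] (h : IsBddMartingaleDiff μ ℱ D K) (s : ℕ) {Z : Ω → E}
    (hZ : StronglyMeasurable[ℱ s] Z) {C : ℝ} (hC : ∀ᵐ ω ∂μ, ‖Z ω‖ ≤ C) :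
    ∫ ω, D s ω • Z ω ∂μ = 0 := by
  rw [← integral_condExp (ℱ.le s)]
  exact (integral_congr_ae (h.condExp_smul_eq_zero s hZ hC)).trans (by simp)

lemma mul_adapted (h : IsBddMartingaleDiff μ ℱ D K) {Z : ℕ → Ω → ℝ}
    (hZ : ∀ s, Measurable[ℱ s] (Z s)) {C : ℝ} (hC : ∀ s, ∀ᵐ ω ∂μ, |Z s ω| ≤ C) :
    IsBddMartingaleDiff μ ℱ (fun s ω => D s ω * Z s ω) (K * C) where
  measurable_succ s := (h.measurable_succ s).mul ((hZ s).mono (ℱ.mono s.le_succ) le_rfl)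
  abs_le s := by
    filter_upwards [h.abs_le s, hC s] with ω hD hZ
    rw [abs_mul]
    exact mul_le_mul hD hZ (abs_nonneg _) ((abs_nonneg _).trans hD)
  condExp_eq_zero s := h.condExp_smul_eq_zero s (hZ s).stronglyMeasurable (hC s)

end IsBddMartingaleDiff

lemma isBddMartingaleDiff_sub_condExp [IsFiniteMeasure μ] {ℱ : Filtration ℕ mΩ}
    {X Z : ℕ → Ω → ℝ} {A B : ℝ} (hX : ∀ s, Measurable[ℱ (s + 1)] (X s))
    (hZ : ∀ s, Measurable[ℱ s] (Z s)) (hA : ∀ s, ∀ᵐ ω ∂μ, |X s ω| ≤ A)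
    (hB : ∀ s, ∀ᵐ ω ∂μ, |Z s ω| ≤ B) (hcond : ∀ s, μ[X s | ℱ s] =ᵐ[μ] Z s) :
    IsBddMartingaleDiff μ ℱ (fun s ω => X s ω - Z s ω) (A + B) where
  measurable_succ s := (hX s).sub ((hZ s).mono (ℱ.mono s.le_succ) le_rfl)
  abs_le s := by
    filter_upwards [hA s, hB s] with ω hXω hZω
    exact (abs_sub _ _).trans (add_le_add hXω hZω)
  condExp_eq_zero s := by
    have hXint : Integrable (X s) μ := Integrable.of_bound
      ((hX s).mono (ℱ.le _) le_rfl).aestronglyMeasurable A (hA s)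
    have hZint : Integrable (Z s) μ := Integrable.of_bound
      ((hZ s).mono (ℱ.le _) le_rfl).aestronglyMeasurable B (hB s)
    filter_upwards [condExp_sub hXint hZint (ℱ s), hcond s] with ω hsub hω
    refine hsub.trans ?_
    rw [Pi.sub_apply, hω, condExp_of_stronglyMeasurable (ℱ.le s) (hZ s).stronglyMeasurable hZint,
      sub_self, Pi.zero_apply]

end MartingaleDifferences

/-! ### Strong law for bounded martingale differences -/

section StrongLaw

variable {Ω : Type*} {mΩ : MeasurableSpace Ω} {μ : Measure Ω}
  {ℱ : Filtration ℕ mΩ} {D : ℕ → Ω → ℝ} {K : ℝ}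

lemma eventually_succ_sq_le_mul_sq {a : ℝ} (ha : 1 < a) :
    ∀ᶠ j : ℕ in atTop, (((j + 1) ^ 2 : ℕ) : ℝ) ≤ a * ((j ^ 2 : ℕ) : ℝ) := by
  have hlim : Tendsto (fun j : ℕ => (1 + 1 / (j : ℝ)) ^ 2) atTop (nhds ((1 + 0) ^ 2)) :=
    (tendsto_const_nhds.add tendsto_one_div_atTop_nhds_zero_nat).pow 2
  filter_upwards [hlim.eventually_lt_const (u := a) (by simpa using ha),
    eventually_gt_atTop 0] with j hj hj0
  calc (((j + 1) ^ 2 : ℕ) : ℝ) = (1 + 1 / (j : ℝ)) ^ 2 * ((j ^ 2 : ℕ) : ℝ) := by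
        push_cast; field_simp
    _ ≤ a * ((j ^ 2 : ℕ) : ℝ) := by gcongr

-- Adding `K * t` makes the sums monotone, and consecutive squares have ratio tending to `1`.
lemma tendsto_sum_div_of_tendsto_sum_sq_div {d : ℕ → ℝ} (hd : ∀ s, -K ≤ d s) {l : ℝ}
    (hsq : Tendsto (fun j : ℕ => (∑ s ∈ range (j ^ 2), d s) / ((j ^ 2 : ℕ) : ℝ)) atTop (nhds l)) :
    Tendsto (fun t : ℕ => (∑ s ∈ range t, d s) / t) atTop (nhds l) := by
  have hshift : ∀ t : ℕ, t ≠ 0 →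
      ((∑ s ∈ range t, d s) + K * t) / t = (∑ s ∈ range t, d s) / t + K := by
    intro t ht
    field_simp
  have hmono : Monotone fun t : ℕ => (∑ s ∈ range t, d s) + K * t := by
    refine monotone_nat_of_le_succ fun t => ?_
    rw [sum_range_succ]
    push_cast
    linarith [hd t]
  have hshifted := tendsto_div_of_monotone_of_exists_subseq_tendsto_div _ (l + K) hmono
    fun a ha => ⟨fun j => j ^ 2, eventually_succ_sq_le_mul_sq ha, tendsto_pow_atTop two_ne_zero,
      (hsq.add_const K).congr' ?_⟩
  · refine (add_sub_cancel_right l K ▸ hshifted.sub_const K).congr' ?_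
    filter_upwards [eventually_ne_atTop 0] with t ht
    rw [hshift t ht, add_sub_cancel_right]
  · filter_upwards [eventually_ne_atTop 0] with j hj
    exact (hshift (j ^ 2) (pow_ne_zero 2 hj)).symm

namespace IsBddMartingaleDiff

lemma integrable_sum_sq [IsFiniteMeasure μ] (h : IsBddMartingaleDiff μ ℱ D K) (t : ℕ) :
    Integrable (fun ω => (∑ s ∈ range t, D s ω) ^ 2) μ := by
  refine Integrable.of_bound
    (((h.measurable_sum t).mono (ℱ.le t) le_rfl).pow_const 2).aestronglyMeasurable
    ((t * K) ^ 2) ?_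
  filter_upwards [h.ae_abs_sum_le t] with ω hω
  rw [norm_pow, Real.norm_eq_abs]
  gcongr

lemma integrable_sq [IsFiniteMeasure μ] (h : IsBddMartingaleDiff μ ℱ D K) (s : ℕ) :
    Integrable (fun ω => D s ω ^ 2) μ := by
  simp_rw [pow_two]
  exact h.integrable_smul s (h.measurable s).aestronglyMeasurable (h.abs_le s)

variable [IsProbabilityMeasure μ]

lemma integral_sq_le (h : IsBddMartingaleDiff μ ℱ D K) (s : ℕ) :
    ∫ ω, D s ω ^ 2 ∂μ ≤ K ^ 2 := by
  refine (integral_mono_ae (h.integrable_sq s) (integrable_const (K ^ 2)) ?_).trans_eq (by simp)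
  filter_upwards [h.abs_le s] with ω hω using sq_le_sq.2 (hω.trans (le_abs_self K))

lemma integral_sum_sq_le (h : IsBddMartingaleDiff μ ℱ D K) (t : ℕ) :
    ∫ ω, (∑ s ∈ range t, D s ω) ^ 2 ∂μ ≤ t * K ^ 2 := by
  induction t with
  | zero => simp
  | succ t ih =>
    have hcross_int : Integrable (fun ω => D t ω * ∑ s ∈ range t, D s ω) μ :=
      h.integrable_smul t ((h.measurable_sum t).mono (ℱ.le t) le_rfl).aestronglyMeasurable
        (h.ae_abs_sum_le t)
    have hcross : ∫ ω, D t ω * ∑ s ∈ range t, D s ω ∂μ = 0 :=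
      h.integral_smul_eq_zero t (h.measurable_sum t).stronglyMeasurable (h.ae_abs_sum_le t)
    have hsum_int : Integrable
        (fun ω => (∑ s ∈ range t, D s ω) ^ 2 + 2 * (D t ω * ∑ s ∈ range t, D s ω)) μ :=
      (h.integrable_sum_sq t).add (hcross_int.const_mul 2)
    calc ∫ ω, (∑ s ∈ range (t + 1), D s ω) ^ 2 ∂μ
        = ∫ ω, ((∑ s ∈ range t, D s ω) ^ 2 + 2 * (D t ω * ∑ s ∈ range t, D s ω))
            + D t ω ^ 2 ∂μ := by
          congr 1 with ω
          rw [sum_range_succ]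
          ring
      _ = ∫ ω, (∑ s ∈ range t, D s ω) ^ 2 ∂μ + ∫ ω, D t ω ^ 2 ∂μ := by
          rw [integral_add hsum_int (h.integrable_sq t),
            integral_add (h.integrable_sum_sq t) (hcross_int.const_mul 2), integral_const_mul,
            hcross, mul_zero, add_zero]
      _ ≤ (t + 1 : ℕ) * K ^ 2 := by
          push_cast
          linarith [h.integral_sq_le t]

lemma ae_tendsto_sum_sq_div (h : IsBddMartingaleDiff μ ℱ D K) :
    ∀ᵐ ω ∂μ, Tendsto (fun j : ℕ => (∑ s ∈ range (j ^ 2), D s ω) / ((j ^ 2 : ℕ) : ℝ))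
      atTop (nhds 0) := by
  have hbound : ∀ j : ℕ,
      ∫ ω, ‖((∑ s ∈ range (j ^ 2), D s ω) / ((j ^ 2 : ℕ) : ℝ)) ^ 2‖ ∂μ
        ≤ K ^ 2 * (1 / (j : ℝ) ^ 2) := by
    intro j
    simp only [norm_pow, Real.norm_eq_abs, sq_abs]
    simp_rw [div_pow, integral_div]
    calc (∫ ω, (∑ s ∈ range (j ^ 2), D s ω) ^ 2 ∂μ) / ((j ^ 2 : ℕ) : ℝ) ^ 2
        ≤ ((j ^ 2 : ℕ) * K ^ 2) / ((j ^ 2 : ℕ) : ℝ) ^ 2 := by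
          gcongr
          exact h.integral_sum_sq_le (j ^ 2)
      _ = K ^ 2 * (1 / (j : ℝ) ^ 2) := by
          rcases eq_or_ne j 0 with rfl | hj
          · simp
          · push_cast; field_simp
  have hsum : Summable fun j : ℕ =>
      ∫ ω, ‖((∑ s ∈ range (j ^ 2), D s ω) / ((j ^ 2 : ℕ) : ℝ)) ^ 2‖ ∂μ :=
    ((Real.summable_one_div_nat_pow.2 one_lt_two).mul_left (K ^ 2)).of_nonneg_of_le
      (fun j => integral_nonneg fun ω => norm_nonneg _) hbound
  have hint : ∀ j : ℕ, Integrable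
      (fun ω => ((∑ s ∈ range (j ^ 2), D s ω) / ((j ^ 2 : ℕ) : ℝ)) ^ 2) μ := fun j => by
    simpa only [div_pow] using (h.integrable_sum_sq (j ^ 2)).div_const _
  filter_upwards [ae_tendsto_zero_of_summable_integral_norm hint hsum] with ω hω
  have hsqrt := hω.sqrt
  simp only [Real.sqrt_sq_eq_abs, Real.sqrt_zero] at hsqrt
  exact (tendsto_zero_iff_abs_tendsto_zero _).2 hsqrt

theorem ae_tendsto_sum_div (h : IsBddMartingaleDiff μ ℱ D K) :
    ∀ᵐ ω ∂μ, Tendsto (fun t : ℕ => (∑ s ∈ range t, D s ω) / t) atTop (nhds 0) := by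
  filter_upwards [h.ae_tendsto_sum_sq_div, h.ae_abs_le] with ω hsq hbdd
  exact tendsto_sum_div_of_tendsto_sum_sq_div (fun s => (_root_.abs_le.1 (hbdd s)).1) hsq

end IsBddMartingaleDiff

end StrongLaw

/-! ### Central limit theorem for bounded martingale differences -/

section MartingaleCLT

variable {Ω : Type*} {mΩ : MeasurableSpace Ω} {μ : Measure Ω}
  {ℱ : Filtration ℕ mΩ} {D : ℕ → Ω → ℝ} {K : ℝ}

-- The real part `y ^ 2 / 2` cancels the second-order term of `exp (I * y)`.
lemma norm_cexp_I_mul_add_half_sq_sub_le {y : ℝ} (hy : |y| ≤ 1 / 2) :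
    ‖Complex.exp (Complex.I * y + ((y ^ 2 / 2 : ℝ) : ℂ)) - 1 - Complex.I * y‖ ≤ |y| ^ 3 := by
  set z : ℂ := Complex.I * y + ((y ^ 2 / 2 : ℝ) : ℂ) with hz
  have hy0 : 0 ≤ |y| := abs_nonneg y
  have hnorm_z : ‖z‖ ≤ 5 / 4 * |y| := by
    refine (norm_add_le _ _).trans ?_
    rw [norm_mul, Complex.norm_I, Complex.norm_real, Complex.norm_real, Real.norm_eq_abs,
      Real.norm_eq_abs, abs_div, abs_pow, abs_two]
    nlinarith
  have htaylor : ‖Complex.exp z - (1 + z + z ^ 2 / 2)‖ ≤ ‖z‖ ^ 3 * (2 / 9) := by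
    have := Complex.exp_bound (x := z) (by linarith) (n := 3) (by norm_num)
    norm_num [sum_range_succ, Nat.factorial] at this
    exact this
  have hsplit : Complex.exp z - 1 - Complex.I * y = (Complex.exp z - (1 + z + z ^ 2 / 2))
      + (Complex.I * ((y ^ 3 / 2 : ℝ) : ℂ) + ((y ^ 4 / 8 : ℝ) : ℂ)) := by
    rw [hz]
    push_cast
    linear_combination (y : ℂ) ^ 2 / 2 * Complex.I_sq
  have hrest : ‖Complex.I * ((y ^ 3 / 2 : ℝ) : ℂ) + ((y ^ 4 / 8 : ℝ) : ℂ)‖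
      ≤ |y| ^ 3 / 2 + |y| ^ 4 / 8 := by
    refine (norm_add_le _ _).trans_eq ?_
    simp
  calc ‖Complex.exp z - 1 - Complex.I * y‖
      ≤ (5 / 4 * |y|) ^ 3 * (2 / 9) + (|y| ^ 3 / 2 + |y| ^ 4 / 8) := by
        rw [hsplit]
        refine (norm_add_le _ _).trans (add_le_add (htaylor.trans ?_) hrest)
        gcongr
    _ ≤ |y| ^ 3 := by nlinarith [pow_nonneg hy0 3]

lemma tendsto_integral_mul_sub_integral_mul_const [IsFiniteMeasure μ] {W g : ℕ → Ω → ℂ}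
    {A B : ℝ} {c : ℂ} (hW : ∀ t, AEStronglyMeasurable (W t) μ)
    (hg : ∀ t, AEStronglyMeasurable (g t) μ) (hA : ∀ t, ∀ᵐ ω ∂μ, ‖W t ω‖ ≤ A)
    (hB : ∀ t, ∀ᵐ ω ∂μ, ‖g t ω‖ ≤ B) (hlim : ∀ᵐ ω ∂μ, Tendsto (fun t => g t ω) atTop (nhds c)) :
    Tendsto (fun t => ∫ ω, W t ω * g t ω ∂μ - (∫ ω, W t ω ∂μ) * c) atTop (nhds 0) := by
  have hintegral : ∀ t, ∫ ω, W t ω * g t ω ∂μ - (∫ ω, W t ω ∂μ) * c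
      = ∫ ω, W t ω * (g t ω - c) ∂μ := by
    intro t
    have hWint : Integrable (W t) μ := Integrable.of_bound (hW t) A (hA t)
    simp_rw [mul_sub]
    rw [integral_sub (hWint.mul_bdd (hg t) (hB t)) (hWint.mul_const c), integral_mul_const]
  simp_rw [hintegral]
  rw [← integral_zero Ω ℂ (μ := μ)]
  refine tendsto_integral_of_dominated_convergence (fun _ => A * (B + ‖c‖))
    (fun t => (hW t).mul ((hg t).sub aestronglyMeasurable_const)) (integrable_const _) ?_ ?_
  · intro t
    filter_upwards [hA t, hB t] with ω hWω hgω
    rw [norm_mul]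
    exact mul_le_mul hWω ((norm_sub_le _ _).trans (by gcongr)) (norm_nonneg _)
      ((norm_nonneg _).trans hWω)
  · filter_upwards [hlim, ae_all_iff.2 hA] with ω hgω hWω
    exact isBoundedUnder_le_mul_tendsto_zero (isBoundedUnder_of ⟨A, hWω⟩)
      (by simpa using hgω.sub_const c)

/-- The exponential `exp (i ∑ D + ½ ∑ D²)` of the partial sums of `D` up to time `t`. For small
martingale differences it is a martingale up to third order, so its mean stays close to `1`. -/
def compensatedExp (D : ℕ → Ω → ℝ) (t : ℕ) (ω : Ω) : ℂ :=
  Complex.exp (Complex.I * ((∑ s ∈ range t, D s ω : ℝ) : ℂ)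
    + (((∑ s ∈ range t, D s ω ^ 2) / 2 : ℝ) : ℂ))

lemma compensatedExp_inv_sqrt_mul (D : ℕ → Ω → ℝ) (t : ℕ) (ω : Ω) :
    compensatedExp (fun s ω => (√t)⁻¹ * D s ω) t ω
      = Complex.exp (Complex.I * (((∑ s ∈ range t, D s ω) / √t : ℝ) : ℂ))
        * Complex.exp (((∑ s ∈ range t, D s ω ^ 2) / t / 2 : ℝ) : ℂ) := by
  simp only [compensatedExp, mul_pow, inv_pow, Real.sq_sqrt (Nat.cast_nonneg t), ← mul_sum,
    ← Complex.exp_add]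
  rw [inv_mul_eq_div, inv_mul_eq_div]

lemma compensatedExp_zero (D : ℕ → Ω → ℝ) (ω : Ω) : compensatedExp D 0 ω = 1 := by
  simp [compensatedExp]

lemma compensatedExp_succ (D : ℕ → Ω → ℝ) (t : ℕ) (ω : Ω) :
    compensatedExp D (t + 1) ω = compensatedExp D t ω
      * Complex.exp (Complex.I * D t ω + ((D t ω ^ 2 / 2 : ℝ) : ℂ)) := by
  rw [compensatedExp, compensatedExp, ← Complex.exp_add, sum_range_succ, sum_range_succ]
  push_cast
  ring_nf

lemma norm_compensatedExp (D : ℕ → Ω → ℝ) (t : ℕ) (ω : Ω) :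
    ‖compensatedExp D t ω‖ = Real.exp ((∑ s ∈ range t, D s ω ^ 2) / 2) := by
  rw [compensatedExp, Complex.norm_exp, Complex.add_re, Complex.I_mul_re, Complex.ofReal_im,
    Complex.ofReal_re, neg_zero, zero_add]

namespace IsBddMartingaleDiff

lemma measurable_compensatedExp (h : IsBddMartingaleDiff μ ℱ D K) (t : ℕ) :
    Measurable[ℱ t] (compensatedExp D t) :=
  Complex.measurable_exp.comp
    (((Complex.measurable_ofReal.comp (h.measurable_sum t)).const_mul _).add
      (Complex.measurable_ofReal.comp ((h.measurable_sum_sq t).div_const 2)))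

lemma ae_norm_compensatedExp_le (h : IsBddMartingaleDiff μ ℱ D K) (t : ℕ) :
    ∀ᵐ ω ∂μ, ‖compensatedExp D t ω‖ ≤ Real.exp (t * K ^ 2 / 2) := by
  filter_upwards [h.ae_sum_sq_le t] with ω hω
  rw [norm_compensatedExp]
  gcongr

lemma integrable_compensatedExp [IsFiniteMeasure μ] (h : IsBddMartingaleDiff μ ℱ D K) (t : ℕ) :
    Integrable (compensatedExp D t) μ :=
  Integrable.of_bound
    ((h.measurable_compensatedExp t).mono (ℱ.le t) le_rfl).aestronglyMeasurable _
    (h.ae_norm_compensatedExp_le t)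

lemma ae_norm_compensatedExp_succ_sub_le (h : IsBddMartingaleDiff μ ℱ D K)
    (hK : K ≤ 1 / 2) (t : ℕ) :
    ∀ᵐ ω ∂μ, ‖compensatedExp D (t + 1) ω - compensatedExp D t ω
      - D t ω • (Complex.I * compensatedExp D t ω)‖ ≤ Real.exp (t * K ^ 2 / 2) * K ^ 3 := by
  filter_upwards [h.ae_norm_compensatedExp_le t, h.abs_le t] with ω hexp hD
  have hfactor : compensatedExp D (t + 1) ω - compensatedExp D t ω
      - D t ω • (Complex.I * compensatedExp D t ω) = compensatedExp D t ω
        * (Complex.exp (Complex.I * D t ω + ((D t ω ^ 2 / 2 : ℝ) : ℂ)) - 1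
          - Complex.I * D t ω) := by
    rw [compensatedExp_succ, Complex.real_smul]
    ring
  rw [hfactor, norm_mul]
  gcongr
  exact (norm_cexp_I_mul_add_half_sq_sub_le (hD.trans hK)).trans (by gcongr)

variable [IsProbabilityMeasure μ]

lemma norm_integral_compensatedExp_succ_sub_le (h : IsBddMartingaleDiff μ ℱ D K)
    (hK : K ≤ 1 / 2) (t : ℕ) :
    ‖∫ ω, compensatedExp D (t + 1) ω ∂μ - ∫ ω, compensatedExp D t ω ∂μ‖
      ≤ Real.exp (t * K ^ 2 / 2) * K ^ 3 := by
  have hlinear_meas : StronglyMeasurable[ℱ t] fun ω => Complex.I * compensatedExp D t ω :=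
    ((h.measurable_compensatedExp t).const_mul _).stronglyMeasurable
  have hlinear_bdd : ∀ᵐ ω ∂μ, ‖Complex.I * compensatedExp D t ω‖ ≤ Real.exp (t * K ^ 2 / 2) := by
    simpa using h.ae_norm_compensatedExp_le t
  have hlinear : ∫ ω, D t ω • (Complex.I * compensatedExp D t ω) ∂μ = 0 :=
    h.integral_smul_eq_zero t hlinear_meas hlinear_bdd
  have hlinear_int : Integrable (fun ω => D t ω • (Complex.I * compensatedExp D t ω)) μ :=
    h.integrable_smul t (hlinear_meas.mono (ℱ.le t)).aestronglyMeasurable hlinear_bdd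
  have hdiff : ∫ ω, compensatedExp D (t + 1) ω ∂μ - ∫ ω, compensatedExp D t ω ∂μ
      = ∫ ω, compensatedExp D (t + 1) ω - compensatedExp D t ω
          - D t ω • (Complex.I * compensatedExp D t ω) ∂μ := by
    have hsucc := h.integrable_compensatedExp (t + 1)
    have hself := h.integrable_compensatedExp t
    have hsub : Integrable (fun ω => compensatedExp D (t + 1) ω - compensatedExp D t ω) μ :=
      hsucc.sub hself
    rw [integral_sub hsub hlinear_int, hlinear, sub_zero, integral_sub hsucc hself]
  rw [hdiff]
  simpa using norm_integral_le_of_norm_le_const (h.ae_norm_compensatedExp_succ_sub_le hK t)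

lemma norm_integral_compensatedExp_sub_one_le (h : IsBddMartingaleDiff μ ℱ D K)
    (hK : K ≤ 1 / 2) (t : ℕ) :
    ‖∫ ω, compensatedExp D t ω ∂μ - 1‖ ≤ t * (Real.exp (t * K ^ 2 / 2) * K ^ 3) := by
  have hK0 : 0 ≤ K := h.nonneg
  calc ‖∫ ω, compensatedExp D t ω ∂μ - 1‖
      = ‖∑ s ∈ range t, (∫ ω, compensatedExp D (s + 1) ω ∂μ - ∫ ω, compensatedExp D s ω ∂μ)‖ := by
        rw [sum_range_sub (fun s => ∫ ω, compensatedExp D s ω ∂μ)]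
        simp [compensatedExp_zero]
    _ ≤ ∑ s ∈ range t, Real.exp (t * K ^ 2 / 2) * K ^ 3 := by
        refine norm_sum_le_of_le _ fun s hs =>
          (h.norm_integral_compensatedExp_succ_sub_le hK s).trans ?_
        have hst : s ≤ t := (mem_range.1 hs).le
        gcongr
    _ = t * (Real.exp (t * K ^ 2 / 2) * K ^ 3) := by simp

lemma tendsto_integral_compensatedExp (h : IsBddMartingaleDiff μ ℱ D K) :
    Tendsto (fun t : ℕ => ∫ ω, compensatedExp (fun s ω => (√t)⁻¹ * D s ω) t ω ∂μ)
      atTop (nhds 1) := by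
  have hsqrt : Tendsto (fun t : ℕ => (√t)⁻¹) atTop (nhds 0) :=
    (Real.tendsto_sqrt_atTop.comp tendsto_natCast_atTop_atTop).inv_tendsto_atTop
  have hsmall : ∀ᶠ t : ℕ in atTop, |(√t)⁻¹| * K ≤ 1 / 2 := by
    have := hsqrt.abs.mul_const K
    rw [abs_zero, zero_mul] at this
    exact this.eventually_le_const (by norm_num)
  have hzero : Tendsto (fun t : ℕ => Real.exp (K ^ 2 / 2) * K ^ 3 * (√t)⁻¹) atTop (nhds 0) := by
    simpa using hsqrt.const_mul (Real.exp (K ^ 2 / 2) * K ^ 3)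
  rw [tendsto_iff_norm_sub_tendsto_zero]
  refine squeeze_zero' (Eventually.of_forall fun t => norm_nonneg _) ?_ hzero
  filter_upwards [hsmall, eventually_gt_atTop 0] with t ht ht0
  have ht0' : (0 : ℝ) < t := Nat.cast_pos.2 ht0
  refine ((h.const_mul (√t)⁻¹).norm_integral_compensatedExp_sub_one_le ht t).trans_eq ?_
  have hsq : √(t : ℝ) ^ 2 = t := Real.sq_sqrt ht0'.le
  have hexponent : t * (|(√(t : ℝ))⁻¹| * K) ^ 2 / 2 = K ^ 2 / 2 := by
    rw [mul_pow, sq_abs, inv_pow, hsq]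
    field_simp
  rw [hexponent, abs_of_nonneg (by positivity)]
  nth_rewrite 1 [← hsq]
  field_simp

-- Dividing `compensatedExp` by its asymptotically deterministic modulus `exp (σ / 2)`.
theorem tendsto_integral_cexp_sum_div_sqrt (h : IsBddMartingaleDiff μ ℱ D K) {σ : ℝ}
    (hσ : ∀ᵐ ω ∂μ, Tendsto (fun t : ℕ => (∑ s ∈ range t, D s ω ^ 2) / t) atTop (nhds σ)) :
    Tendsto (fun t : ℕ =>
        ∫ ω, Complex.exp (Complex.I * (((∑ s ∈ range t, D s ω) / √t : ℝ) : ℂ)) ∂μ)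
      atTop (nhds (Complex.exp (-((σ / 2 : ℝ) : ℂ)))) := by
  have hmod_le : ∀ t : ℕ, ∀ᵐ ω ∂μ,
      ‖Complex.exp (((∑ s ∈ range t, D s ω ^ 2) / t / 2 : ℝ) : ℂ)‖ ≤ Real.exp (K ^ 2 / 2) := by
    intro t
    filter_upwards [h.ae_sum_sq_le t] with ω hω
    rw [Complex.norm_exp, Complex.ofReal_re]
    gcongr
    exact div_le_of_le_mul₀ (by positivity) (by positivity) (by linarith)
  have hmod : ∀ᵐ ω ∂μ, Tendsto
      (fun t : ℕ => Complex.exp (((∑ s ∈ range t, D s ω ^ 2) / t / 2 : ℝ) : ℂ)) atTop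
      (nhds (Complex.exp ((σ / 2 : ℝ) : ℂ))) := by
    filter_upwards [hσ] with ω hω
    exact (Complex.continuous_exp.comp Complex.continuous_ofReal).continuousAt.tendsto.comp
      (hω.div_const 2)
  have hmeas : ∀ t : ℕ, Measurable fun ω =>
      Complex.exp (Complex.I * (((∑ s ∈ range t, D s ω) / √t : ℝ) : ℂ)) := fun t => by
    have := h.measurable
    fun_prop
  have hmeas_mod : ∀ t : ℕ, Measurable fun ω =>
      Complex.exp (((∑ s ∈ range t, D s ω ^ 2) / t / 2 : ℝ) : ℂ) := fun t => by
    have := h.measurable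
    fun_prop
  have hcompare := tendsto_integral_mul_sub_integral_mul_const
    (W := fun t ω => Complex.exp (Complex.I * (((∑ s ∈ range t, D s ω) / √t : ℝ) : ℂ))) (A := 1)
    (fun t => (hmeas t).aestronglyMeasurable) (fun t => (hmeas_mod t).aestronglyMeasurable)
    (fun t => ae_of_all _ fun ω => (Complex.norm_exp_I_mul_ofReal _).le) hmod_le hmod
  simp_rw [← compensatedExp_inv_sqrt_mul] at hcompare
  have hratio := (h.tendsto_integral_compensatedExp.sub hcompare).mul_const
    (Complex.exp (-((σ / 2 : ℝ) : ℂ)))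
  simpa [mul_assoc, ← Complex.exp_add] using hratio

end IsBddMartingaleDiff

end MartingaleCLT

/-! ### Averages of orbits and convergence in distribution -/

section Averages

-- Every cluster point of the averages is a fixed point of `T`.
lemma tendsto_average_of_unique_fixedPoint {E : Type*} [AddCommGroup E] [Module ℝ E]
    [TopologicalSpace E] [IsTopologicalAddGroup E] [T2Space E] {K : Set E} (hK : IsCompact K)
    (hconv : Convex ℝ K) (T : E →L[ℝ] E) {x : ℕ → E} (hx : ∀ s, x s ∈ K)
    (hT : Tendsto (fun t : ℕ => (t : ℝ)⁻¹ • ∑ s ∈ range t, (T (x s) - x s)) atTop (nhds 0))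
    {p : E} (huniq : ∀ y ∈ K, T y = y → y = p) :
    Tendsto (fun t : ℕ => (t : ℝ)⁻¹ • ∑ s ∈ range t, x s) atTop (nhds p) := by
  refine hK.tendsto_nhds_of_unique_mapClusterPt ?_ fun y hy hcluster => huniq y hy ?_
  · filter_upwards [eventually_ne_atTop 0] with t ht
    rw [smul_sum]
    refine hconv.sum_mem (fun s _ => by positivity) ?_ fun s _ => hx s
    simp [ht]
  · have hcluster_diff : MapClusterPt (T y - y) atTop
        ((fun z => T z - z) ∘ fun t : ℕ => (t : ℝ)⁻¹ • ∑ s ∈ range t, x s) :=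
      hcluster.continuousAt_comp (by fun_prop : Continuous fun z => T z - z).continuousAt
    have hlim : Tendsto ((fun z => T z - z) ∘ fun t : ℕ => (t : ℝ)⁻¹ • ∑ s ∈ range t, x s) atTop
        (nhds 0) := by
      refine hT.congr fun t => ?_
      simp only [Function.comp_apply, map_smul, map_sum, sum_sub_distrib, smul_sub]
    exact sub_eq_zero.1 (eq_of_nhds_neBot (ClusterPt.mono hcluster_diff hlim))

lemma tendsto_sum_range_sub_div {u : ℕ → ℝ} {C : ℝ} (hC : ∀ t, |u t| ≤ C) :
    Tendsto (fun t : ℕ => (∑ s ∈ range t, (u (s + 1) - u s)) / t) atTop (nhds 0) := by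
  simp_rw [sum_range_sub]
  refine squeeze_zero_norm (a := fun t : ℕ => (C + C) / (t : ℝ)) (fun t => ?_)
    (tendsto_const_div_atTop_nhds_zero_nat _)
  rw [Real.norm_eq_abs, abs_div, Nat.abs_cast]
  gcongr
  exact (abs_sub _ _).trans (add_le_add (hC t) (hC 0))

end Averages

section Distribution

variable {Ω : Type*} {mΩ : MeasurableSpace Ω} {μ : Measure Ω}

lemma norm_cexp_I_mul_sub_cexp_I_mul_le (x y : ℝ) :
    ‖Complex.exp (Complex.I * x) - Complex.exp (Complex.I * y)‖ ≤ |x - y| := by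
  have hfactor : Complex.exp (Complex.I * x) - Complex.exp (Complex.I * y)
      = Complex.exp (Complex.I * y) * (Complex.exp (Complex.I * ((x - y : ℝ) : ℂ)) - 1) := by
    rw [mul_sub, ← Complex.exp_add]
    push_cast
    ring_nf
  rw [hfactor, norm_mul, Complex.norm_exp_I_mul_ofReal, one_mul]
  exact Real.norm_exp_I_mul_ofReal_sub_one_le

lemma integrable_cexp_I_mul [IsFiniteMeasure μ] {X : Ω → ℝ} (hX : Measurable X) :
    Integrable (fun ω => Complex.exp (Complex.I * X ω)) μ :=
  Integrable.of_bound (by fun_prop) 1 (ae_of_all _ fun ω => (Complex.norm_exp_I_mul_ofReal _).le)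

lemma tendsto_integral_cexp_div_sqrt_congr [IsProbabilityMeasure μ] {X Z : ℕ → Ω → ℝ}
    (hX : ∀ t, Measurable (X t)) (hZ : ∀ t, Measurable (Z t)) {C : ℝ}
    (hC : ∀ t, ∀ᵐ ω ∂μ, |X t ω - Z t ω| ≤ C) {c : ℂ}
    (hlim : Tendsto (fun t : ℕ => ∫ ω, Complex.exp (Complex.I * ((X t ω / √t : ℝ) : ℂ)) ∂μ)
      atTop (nhds c)) :
    Tendsto (fun t : ℕ => ∫ ω, Complex.exp (Complex.I * ((Z t ω / √t : ℝ) : ℂ)) ∂μ)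
      atTop (nhds c) := by
  have hsqrt : Tendsto (fun t : ℕ => √t) atTop atTop :=
    Real.tendsto_sqrt_atTop.comp tendsto_natCast_atTop_atTop
  refine tendsto_of_tendsto_of_dist hlim
    (squeeze_zero (fun _ => dist_nonneg) (fun t => ?_) (hsqrt.const_div_atTop C))
  rw [dist_eq_norm, ← integral_sub (integrable_cexp_I_mul ((hX t).div_const _))
    (integrable_cexp_I_mul ((hZ t).div_const _))]
  refine (norm_integral_le_of_norm_le_const (C := C / √t) ?_).trans (by simp)
  filter_upwards [hC t] with ω hω
  refine (norm_cexp_I_mul_sub_cexp_I_mul_le _ _).trans ?_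
  rw [← sub_div, abs_div, abs_of_nonneg (Real.sqrt_nonneg _)]
  gcongr

variable {ι : Type*} [Fintype ι]

lemma charFun_map_toLp (P : Measure (ι → ℝ)) (ξ : EuclideanSpace ℝ ι) :
    charFun (P.map (WithLp.toLp 2)) ξ
      = ∫ x, Complex.exp (Complex.I * ((∑ i, ξ i * x i : ℝ) : ℂ)) ∂P := by
  rw [charFun_apply, integral_map (PiLp.continuous_toLp 2 _).measurable.aemeasurable
    (Continuous.aestronglyMeasurable (by fun_prop))]
  congr 1 with x
  rw [mul_comm, PiLp.inner_apply]
  rfl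

lemma tendsto_integral_comp_of_tendsto_integral_cexp [IsProbabilityMeasure μ]
    {X : ℕ → Ω → ι → ℝ} (hX : ∀ t, Measurable (X t))
    {ν : Measure (ι → ℝ)} [IsProbabilityMeasure ν]
    (hchar : ∀ l : ι → ℝ,
      Tendsto (fun t => ∫ ω, Complex.exp (Complex.I * ((∑ i, l i * X t ω i : ℝ) : ℂ)) ∂μ) atTop
        (nhds (∫ x, Complex.exp (Complex.I * ((∑ i, l i * x i : ℝ) : ℂ)) ∂ν)))
    (f : BoundedContinuousFunction (ι → ℝ) ℝ) :
    Tendsto (fun t => ∫ ω, f (X t ω) ∂μ) atTop (nhds (∫ x, f x ∂ν)) := by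
  have htoLp : Measurable (WithLp.toLp 2 : (ι → ℝ) → EuclideanSpace ℝ ι) :=
    (PiLp.continuous_toLp 2 _).measurable
  have := fun t => Measure.isProbabilityMeasure_map (μ := μ) (hX t).aemeasurable
  let law (P : Measure (ι → ℝ)) [IsProbabilityMeasure P] :
      ProbabilityMeasure (EuclideanSpace ℝ ι) :=
    ⟨P.map (WithLp.toLp 2), Measure.isProbabilityMeasure_map htoLp.aemeasurable⟩
  have hlaw : Tendsto (fun t => law (μ.map (X t))) atTop (nhds (law ν)) := by
    refine ProbabilityMeasure.tendsto_iff_tendsto_charFun.2 fun ξ => ?_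
    simp only [law, ProbabilityMeasure.coe_mk, charFun_map_toLp]
    refine (hchar ξ.ofLp).congr fun t => ?_
    rw [integral_map (hX t).aemeasurable (Continuous.aestronglyMeasurable (by fun_prop))]
  have hintegral (P : Measure (ι → ℝ)) [IsProbabilityMeasure P] :
      ∫ x, f x.ofLp ∂(law P : Measure (EuclideanSpace ℝ ι)) = ∫ x, f x ∂P :=
    integral_map htoLp.aemeasurable
      (f.continuous.comp (PiLp.continuous_ofLp 2 _)).aestronglyMeasurable
  have htest := ProbabilityMeasure.tendsto_iff_forall_integral_tendsto.1 hlaw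
    (f.compContinuous ⟨_, PiLp.continuous_ofLp 2 fun _ : ι => ℝ⟩)
  simp only [BoundedContinuousFunction.compContinuous_apply, ContinuousMap.coe_mk,
    hintegral] at htest
  exact htest.congr fun t => integral_map (hX t).aemeasurable f.continuous.aestronglyMeasurable

/-- The centred Gaussian measure with covariance matrix `C` on `ι → ℝ`; Mathlib's
`multivariateGaussian` lives on `EuclideanSpace ℝ ι`. It is meaningful only for positive
semidefinite `C`. -/
def gaussianPi [DecidableEq ι] (C : Matrix ι ι ℝ) : Measure (ι → ℝ) :=
  (ProbabilityTheory.multivariateGaussian 0 C).map WithLp.ofLp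

instance [DecidableEq ι] (C : Matrix ι ι ℝ) : IsProbabilityMeasure (gaussianPi C) :=
  Measure.isProbabilityMeasure_map (PiLp.continuous_ofLp 2 _).measurable.aemeasurable

lemma integral_cexp_gaussianPi [DecidableEq ι] {C : Matrix ι ι ℝ} (hC : C.PosSemidef)
    (l : ι → ℝ) :
    ∫ x, Complex.exp (Complex.I * ((∑ i, l i * x i : ℝ) : ℂ)) ∂gaussianPi C
      = Complex.exp (-(((∑ i, ∑ j, l i * C i j * l j) / 2 : ℝ) : ℂ)) := by
  have hmap : (gaussianPi C).map (WithLp.toLp 2) = ProbabilityTheory.multivariateGaussian 0 C := by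
    rw [gaussianPi, Measure.map_map (PiLp.continuous_toLp 2 _).measurable
      (PiLp.continuous_ofLp 2 _).measurable]
    exact Measure.map_id
  have hquad : l ⬝ᵥ C *ᵥ l = ∑ i, ∑ j, l i * C i j * l j := by
    simp only [dotProduct, mulVec, mul_sum, mul_assoc]
  rw [← charFun_map_toLp (gaussianPi C) (WithLp.toLp 2 l), hmap,
    ProbabilityTheory.charFun_multivariateGaussian hC]
  congr 1
  rw [hquad]
  simp

end Distribution

/-! ### Observables, channels and wave-packet reduction -/

section Observables

variable {d ι : Type*} [Fintype d]

/-- The expectation `Re Tr(σ B)` of the observable `B` in the state `σ`, as a real bilinear form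
in `B` and `σ`. Observables need not be Hermitian. -/
def expVal : Matrix d d ℂ →ₗ[ℝ] Matrix d d ℂ →ₗ[ℝ] ℝ :=
  LinearMap.mk₂ ℝ (fun B σ => ((σ * B).trace).re) (by simp [Matrix.mul_add]) (by simp)
    (by simp [Matrix.add_mul]) (by simp)

lemma expVal_apply (B σ : Matrix d d ℂ) : expVal B σ = ((σ * B).trace).re := rfl

@[fun_prop]
lemma continuous_expVal (B : Matrix d d ℂ) : Continuous (expVal B) := by
  change Continuous fun σ => ((σ * B).trace).re
  fun_prop

lemma expVal_conj (A B σ : Matrix d d ℂ) : expVal B (A * σ * Aᴴ) = expVal (Aᴴ * B * A) σ := by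
  rw [expVal_apply, expVal_apply, Matrix.mul_assoc, Matrix.mul_assoc, trace_mul_comm]
  simp only [Matrix.mul_assoc]

lemma expVal_single [DecidableEq d] (a b : d) (c : ℂ) (σ : Matrix d d ℂ) :
    expVal (single b a c) σ = (σ a b * c).re := by
  simp [expVal_apply, trace_mul_single]

lemma tendsto_zero_of_tendsto_expVal_single [DecidableEq d] {l : Filter ι}
    {x : ι → Matrix d d ℂ}
    (hre : ∀ a b, Tendsto (fun t => expVal (single b a 1) (x t)) l (nhds 0))
    (him : ∀ a b, Tendsto (fun t => expVal (single b a (-Complex.I)) (x t)) l (nhds 0)) :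
    Tendsto x l (nhds 0) := by
  refine tendsto_pi_nhds.2 fun a => tendsto_pi_nhds.2 fun b => ?_
  have hre' : Tendsto (fun t => (x t a b).re) l (nhds 0) := by
    simpa [expVal_single] using hre a b
  have him' : Tendsto (fun t => (x t a b).im) l (nhds 0) := by
    simpa [expVal_single] using him a b
  have hentry : Tendsto (fun t => ((x t a b).re : ℂ) + (x t a b).im * Complex.I) l
      (nhds (((0 : ℝ) : ℂ) + ((0 : ℝ) : ℂ) * Complex.I)) :=
    hre'.ofReal.add (him'.ofReal.mul_const _)
  simpa [Complex.re_add_im] using hentry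

variable [Fintype ι]

/-- The quantum channel `σ ↦ ∑ i, M i * σ * (M i)ᴴ` with Kraus operators `M i`; no normalization of
the Kraus operators is imposed. -/
def channel (M : ι → Matrix d d ℂ) : Matrix d d ℂ →L[ℝ] Matrix d d ℂ where
  toFun σ := ∑ i, M i * σ * (M i)ᴴ
  map_add' σ τ := by simp [Matrix.mul_add, Matrix.add_mul, sum_add_distrib]
  map_smul' c σ := by simp [smul_sum]
  cont := by fun_prop

/-- One measurement step in the Heisenberg picture. The observable `B i` to be evaluated after the
step may depend on the outcome `i`; for constant `B` this is the dual channel applied to `B`. -/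
def heisenberg (M B : ι → Matrix d d ℂ) : Matrix d d ℂ := ∑ i, (M i)ᴴ * B i * M i

lemma expVal_heisenberg (M B : ι → Matrix d d ℂ) (σ : Matrix d d ℂ) :
    expVal (heisenberg M B) σ = ∑ i, expVal (B i) (M i * σ * (M i)ᴴ) := by
  simp only [heisenberg, map_sum, LinearMap.sum_apply, expVal_conj]

lemma expVal_channel (M : ι → Matrix d d ℂ) (B σ : Matrix d d ℂ) :
    expVal B (channel M σ) = expVal (heisenberg M fun _ => B) σ := by
  rw [expVal_heisenberg, ← map_sum]
  rfl

/-- The wave-packet reduction of the state `σ` by the Kraus operator `A`; it is `0` when the outcome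
has probability `0`. -/
def reducedState (A σ : Matrix d d ℂ) : Matrix d d ℂ :=
  ((A * σ * Aᴴ).trace)⁻¹ • (A * σ * Aᴴ)

lemma trace_re_mul_expVal_reducedState {σ : Matrix d d ℂ} (hσ : σ.PosSemidef)
    (A B : Matrix d d ℂ) :
    ((A * σ * Aᴴ).trace).re * expVal B (reducedState A σ) = expVal B (A * σ * Aᴴ) := by
  have hpos : (A * σ * Aᴴ).PosSemidef := hσ.mul_mul_conjTranspose_same A
  have htrace : (((A * σ * Aᴴ).trace).re : ℂ) = (A * σ * Aᴴ).trace :=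
    Complex.ext rfl (Complex.nonneg_iff.1 hpos.trace_nonneg).2
  rw [← smul_eq_mul, ← map_smul, ← Complex.coe_smul, htrace, reducedState]
  by_cases hzero : (A * σ * Aᴴ).trace = 0
  · simp [hpos.trace_eq_zero_iff.1 hzero]
  · rw [smul_inv_smul₀ hzero]

end Observables

/-! ### The set of density matrices -/

section Density

variable {k : ℕ}

instance : BorelSpace (Matrix (Fin k) (Fin k) ℂ) :=
  inferInstanceAs (BorelSpace (Fin k → Fin k → ℂ))

lemma IsDensity.expVal_one {σ : Matrix (Fin k) (Fin k) ℂ} (hσ : IsDensity σ) :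
    expVal 1 σ = 1 := by
  rw [expVal_apply, Matrix.mul_one, hσ.2, Complex.one_re]

lemma IsDensity.expVal_smul_one_add {σ : Matrix (Fin k) (Fin k) ℂ} (hσ : IsDensity σ) (c : ℝ)
    (B : Matrix (Fin k) (Fin k) ℂ) : expVal (c • 1 + B) σ = c + expVal B σ := by
  rw [map_add, map_smul, LinearMap.add_apply, LinearMap.smul_apply, hσ.expVal_one, smul_eq_mul,
    mul_one]

lemma IsDensity.diag_re_le_one {σ : Matrix (Fin k) (Fin k) ℂ} (hσ : IsDensity σ) (i : Fin k) :
    (σ i i).re ≤ 1 := by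
  have hsum : ∑ j, (σ j j).re = 1 := by
    simpa [trace] using congrArg Complex.re hσ.2
  rw [← hsum]
  exact single_le_sum (f := fun j => (σ j j).re)
    (fun j _ => (Complex.nonneg_iff.1 hσ.1.diag_nonneg).1) (mem_univ i)

-- The principal `2 × 2` minors of a positive semidefinite matrix are nonnegative.
lemma norm_entry_sq_le_diag_mul_diag {d : Type*} {σ : Matrix d d ℂ} (hσ : σ.PosSemidef)
    (i j : d) : ‖σ i j‖ ^ 2 ≤ (σ i i).re * (σ j j).re := by
  have hdet := (hσ.submatrix ![i, j]).det_nonneg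
  rw [det_fin_two] at hdet
  simp only [submatrix_apply, cons_val_zero, cons_val_one, ← hσ.1.apply j i] at hdet
  have hre := (Complex.nonneg_iff.1 hdet).1
  have him : (σ i i).im = 0 := (Complex.nonneg_iff.1 hσ.diag_nonneg).2.symm
  rw [Complex.sub_re, Complex.mul_re, him, zero_mul, sub_zero, Complex.star_def, Complex.mul_conj,
    Complex.ofReal_re, Complex.normSq_eq_norm_sq] at hre
  exact sub_nonneg.1 hre

lemma IsDensity.norm_entry_le_one {σ : Matrix (Fin k) (Fin k) ℂ} (hσ : IsDensity σ)
    (i j : Fin k) : ‖σ i j‖ ≤ 1 := by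
  rw [← sq_le_one_iff₀ (norm_nonneg _)]
  calc ‖σ i j‖ ^ 2 ≤ (σ i i).re * (σ j j).re := norm_entry_sq_le_diag_mul_diag hσ.1 i j
    _ ≤ 1 := mul_le_one₀ (hσ.diag_re_le_one i) (Complex.nonneg_iff.1 hσ.1.diag_nonneg).1
      (hσ.diag_re_le_one j)

lemma isClosed_setOf_isDensity : IsClosed {σ : Matrix (Fin k) (Fin k) ℂ | IsDensity σ} := by
  simp only [IsDensity, posSemidef_iff_dotProduct_mulVec, IsHermitian, Set.ofPred_and,
    Set.ofPred_forall]
  refine ((isClosed_eq (by fun_prop) (by fun_prop)).inter (isClosed_iInter fun x => ?_)).inter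
    (isClosed_eq (by fun_prop) (by fun_prop))
  exact isClosed_le (by fun_prop) (by fun_prop)

lemma isCompact_setOf_isDensity : IsCompact {σ : Matrix (Fin k) (Fin k) ℂ | IsDensity σ} := by
  have hpoly : IsCompact (Set.univ.pi fun _ : Fin k => Set.univ.pi fun _ : Fin k =>
      Metric.closedBall (0 : ℂ) 1) :=
    isCompact_univ_pi fun _ => isCompact_univ_pi fun _ => isCompact_closedBall _ _
  refine hpoly.of_isClosed_subset isClosed_setOf_isDensity fun σ hσ i _ j _ => ?_
  simpa using hσ.norm_entry_le_one i j

lemma convex_setOf_isDensity : Convex ℝ {σ : Matrix (Fin k) (Fin k) ℂ | IsDensity σ} := by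
  intro σ hσ τ hτ a b ha hb hab
  refine ⟨(hσ.1.smul ha).add (hτ.1.smul hb), ?_⟩
  rw [trace_add, trace_smul, trace_smul, hσ.2, hτ.2, ← add_smul, hab, one_smul]

lemma exists_forall_isDensity_abs_expVal_le {ι : Type*} [Finite ι]
    (B : ι → Matrix (Fin k) (Fin k) ℂ) :
    ∃ C, ∀ i σ, IsDensity σ → |expVal (B i) σ| ≤ C := by
  choose C hC using fun i => isCompact_setOf_isDensity.exists_bound_of_continuousOn
    (continuous_expVal (B i)).continuousOn
  obtain ⟨C', hC'⟩ := (Set.finite_range C).bddAbove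
  exact ⟨C', fun i σ hσ => (hC i σ hσ).trans (hC' ⟨i, rfl⟩)⟩

lemma measurable_expVal_reducedState (A B : Matrix (Fin k) (Fin k) ℂ) :
    Measurable fun σ => expVal B (reducedState A σ) := by
  have hconj : Continuous fun σ => A * σ * Aᴴ := by fun_prop
  have htrace := hconj.matrix_trace.measurable
  have hnumer := (hconj.matrix_mul continuous_const (B := fun _ => B)).matrix_trace.measurable
  simp only [expVal_apply, reducedState, Matrix.smul_mul, trace_smul, smul_eq_mul]
  exact Complex.measurable_re.comp (htrace.inv.mul hnumer)

lemma IsDensity.sum_mrec {n : ℕ} {M : Fin n → Matrix (Fin k) (Fin k) ℂ}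
    (hM : ∑ i, (M i)ᴴ * M i = 1) {σ : Matrix (Fin k) (Fin k) ℂ} (hσ : IsDensity σ) :
    ∑ i, mrec M σ i = 1 := by
  have hunital : heisenberg M (fun _ => 1) = 1 := by simpa [heisenberg] using hM
  calc ∑ i, mrec M σ i = ∑ i, expVal 1 (M i * σ * (M i)ᴴ) := by
        simp only [expVal_apply, Matrix.mul_one, mrec]
    _ = expVal 1 σ := by rw [← expVal_heisenberg M (fun _ => 1), hunital]
    _ = 1 := hσ.expVal_one

end Density

/-! ### Measurement trajectories -/

section Trajectory

variable {k n : ℕ} {Ω : Type} {mΩ : MeasurableSpace Ω} {μ : Measure Ω}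
  {ℱ : Filtration ℕ mΩ} {M : Fin n → Matrix (Fin k) (Fin k) ℂ}
  {ρ : ℕ → Ω → Matrix (Fin k) (Fin k) ℂ} {Y : ℕ → Ω → Fin n}

/-- The innovation at step `s + 1` of an observable `B i` depending on the outcome `i`: its
expectation after the step minus the conditional mean of that expectation before the step. -/
def innovation (M : Fin n → Matrix (Fin k) (Fin k) ℂ) (ρ : ℕ → Ω → Matrix (Fin k) (Fin k) ℂ)
    (Y : ℕ → Ω → Fin n) (B : Fin n → Matrix (Fin k) (Fin k) ℂ) (s : ℕ) (ω : Ω) : ℝ :=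
  expVal (B (Y (s + 1) ω)) (ρ (s + 1) ω) - expVal (heisenberg M B) (ρ s ω)

lemma innovation_smul_one_add {a : Fin n → ℝ} {A : Matrix (Fin k) (Fin k) ℂ}
    (hA : heisenberg M (fun i => a i • 1 + A) = A) (s : ℕ) {ω : Ω}
    (hdens : IsDensity (ρ (s + 1) ω)) :
    innovation M ρ Y (fun i => a i • 1 + A) s ω
      = a (Y (s + 1) ω) + expVal A (ρ (s + 1) ω) - expVal A (ρ s ω) := by
  rw [innovation, hA, hdens.expVal_smul_one_add]

namespace IsMeasTraj

lemma measurable_indicator (h : IsMeasTraj M μ ℱ ρ Y) (s : ℕ) (i : Fin n) :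
    Measurable[ℱ s] fun ω => if Y s ω = i then (1 : ℝ) else 0 :=
  Measurable.ite (h.adapted_Y s (measurableSet_singleton i)) measurable_const measurable_const

lemma measurable_expVal (h : IsMeasTraj M μ ℱ ρ Y) (B : Matrix (Fin k) (Fin k) ℂ) (s : ℕ) :
    Measurable[ℱ s] fun ω => expVal B (ρ s ω) :=
  (continuous_expVal B).measurable.comp (h.adapted_ρ s)

lemma measurable_expVal_outcome (h : IsMeasTraj M μ ℱ ρ Y)
    (B : Fin n → Matrix (Fin k) (Fin k) ℂ) (s : ℕ) :
    Measurable[ℱ s] fun ω => expVal (B (Y s ω)) (ρ s ω) := by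
  have hsum : (fun ω => expVal (B (Y s ω)) (ρ s ω))
      = fun ω => ∑ i, (if Y s ω = i then (1 : ℝ) else 0) * expVal (B i) (ρ s ω) := by
    simp
  rw [hsum]
  exact Finset.measurable_fun_sum _ fun i _ =>
    (h.measurable_indicator s i).mul (h.measurable_expVal (B i) s)

lemma ae_density (h : IsMeasTraj M μ ℱ ρ Y) : ∀ᵐ ω ∂μ, ∀ s, IsDensity (ρ s ω) :=
  ae_all_iff.2 h.density

lemma ae_succ_eq_reducedState (h : IsMeasTraj M μ ℱ ρ Y) (s : ℕ) :
    ∀ᵐ ω ∂μ, ρ (s + 1) ω = reducedState (M (Y (s + 1) ω)) (ρ s ω) := by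
  filter_upwards [ae_all_iff.2 (h.update s)] with ω hω
  exact hω _ rfl

lemma integrable_expVal_reducedState_mul_indicator [IsFiniteMeasure μ]
    (h : IsMeasTraj M μ ℱ ρ Y) (B : Matrix (Fin k) (Fin k) ℂ) (s : ℕ) (i : Fin n) :
    Integrable (fun ω => expVal B (reducedState (M i) (ρ s ω)) *
      if Y (s + 1) ω = i then (1 : ℝ) else 0) μ := by
  obtain ⟨C, hC⟩ := exists_forall_isDensity_abs_expVal_le fun _ : Unit => B
  have hmeas := ((measurable_expVal_reducedState (M i) B).comp (h.adapted_ρ s)).mono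
    (ℱ.mono s.le_succ) le_rfl |>.mul (h.measurable_indicator (s + 1) i) |>.mono (ℱ.le _) le_rfl
  refine Integrable.of_bound hmeas.aestronglyMeasurable |C| ?_
  filter_upwards [h.density (s + 1), h.ae_succ_eq_reducedState s] with ω hdens hsucc
  split_ifs with hY
  · rw [mul_one, ← hY, ← hsucc]
    exact (hC () _ hdens).trans (le_abs_self C)
  · simp

lemma condExp_expVal_outcome [IsFiniteMeasure μ] (h : IsMeasTraj M μ ℱ ρ Y)
    (B : Fin n → Matrix (Fin k) (Fin k) ℂ) (s : ℕ) :
    μ[fun ω => expVal (B (Y (s + 1) ω)) (ρ (s + 1) ω) | ℱ s]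
      =ᵐ[μ] fun ω => expVal (heisenberg M B) (ρ s ω) := by
  let W (i : Fin n) (ω : Ω) : ℝ := expVal (B i) (reducedState (M i) (ρ s ω))
  let ind (i : Fin n) (ω : Ω) : ℝ := if Y (s + 1) ω = i then 1 else 0
  have hWind (i : Fin n) : Integrable (W i * ind i) μ :=
    h.integrable_expVal_reducedState_mul_indicator (B i) s i
  have hind (i : Fin n) : Integrable (ind i) μ :=
    Integrable.of_bound
      ((h.measurable_indicator (s + 1) i).mono (ℱ.le _) le_rfl).aestronglyMeasurable 1
      (ae_of_all _ fun ω => by dsimp only [ind]; split_ifs <;> simp)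
  have hpull (i : Fin n) : μ[W i * ind i | ℱ s] =ᵐ[μ] W i * μ[ind i | ℱ s] :=
    condExp_mul_of_stronglyMeasurable_left
      ((measurable_expVal_reducedState (M i) (B i)).comp (h.adapted_ρ s)).stronglyMeasurable
      (hWind i) (hind i)
  have hsplit : (fun ω => expVal (B (Y (s + 1) ω)) (ρ (s + 1) ω)) =ᵐ[μ] ∑ i, W i * ind i := by
    filter_upwards [h.ae_succ_eq_reducedState s] with ω hsucc
    simp [W, ind, hsucc]
  refine (condExp_congr_ae hsplit).trans
    ((condExp_finsetSum (fun i _ => hWind i) (ℱ s)).trans ?_)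
  filter_upwards [ae_all_iff.2 hpull, ae_all_iff.2 (h.prob s), h.density s] with ω hpull hprob hdens
  rw [Finset.sum_apply, expVal_heisenberg]
  refine sum_congr rfl fun i _ => ?_
  rw [hpull, Pi.mul_apply, hprob, mul_comm]
  exact trace_re_mul_expVal_reducedState hdens.1 (M i) (B i)

lemma exists_isBddMartingaleDiff_innovation [IsFiniteMeasure μ] (h : IsMeasTraj M μ ℱ ρ Y)
    (B : Fin n → Matrix (Fin k) (Fin k) ℂ) :
    ∃ K, IsBddMartingaleDiff μ ℱ (innovation M ρ Y B) K := by
  obtain ⟨C, hC⟩ := exists_forall_isDensity_abs_expVal_le B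
  obtain ⟨C', hC'⟩ := exists_forall_isDensity_abs_expVal_le fun _ : Unit => heisenberg M B
  refine ⟨C + C', isBddMartingaleDiff_sub_condExp (fun s => h.measurable_expVal_outcome B (s + 1))
    (h.measurable_expVal _) (fun s => ?_) (fun s => ?_) (h.condExp_expVal_outcome B)⟩
  · filter_upwards [h.density (s + 1)] with ω hω using hC _ _ hω
  · filter_upwards [h.density s] with ω hω using hC' () _ hω

lemma exists_ae_abs_sum_innovation_sub_sum_le (h : IsMeasTraj M μ ℱ ρ Y)
    {a : Fin n → ℝ} {A : Matrix (Fin k) (Fin k) ℂ}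
    (hA : heisenberg M (fun i => a i • 1 + A) = A) :
    ∃ C, ∀ t : ℕ, ∀ᵐ ω ∂μ, |∑ s ∈ range t, innovation M ρ Y (fun i => a i • 1 + A) s ω
      - ∑ s ∈ range t, a (Y (s + 1) ω)| ≤ C := by
  obtain ⟨C, hC⟩ := exists_forall_isDensity_abs_expVal_le fun _ : Unit => A
  refine ⟨C + C, fun t => ?_⟩
  filter_upwards [h.ae_density] with ω hdens
  have htele : ∑ s ∈ range t, innovation M ρ Y (fun i => a i • 1 + A) s ω
      - ∑ s ∈ range t, a (Y (s + 1) ω) = expVal A (ρ t ω) - expVal A (ρ 0 ω) := by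
    rw [← sum_sub_distrib, ← sum_range_sub fun s => expVal A (ρ s ω)]
    refine sum_congr rfl fun s _ => ?_
    rw [innovation_smul_one_add hA s (hdens (s + 1))]
    ring
  rw [htele]
  exact (abs_sub _ _).trans (add_le_add (hC () _ (hdens t)) (hC () _ (hdens 0)))

variable [IsProbabilityMeasure μ]

lemma ae_tendsto_sum_innovation_div (h : IsMeasTraj M μ ℱ ρ Y)
    (B : Fin n → Matrix (Fin k) (Fin k) ℂ) :
    ∀ᵐ ω ∂μ, Tendsto (fun t : ℕ => (∑ s ∈ range t, innovation M ρ Y B s ω) / t) atTop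
      (nhds 0) :=
  let ⟨_, hK⟩ := h.exists_isBddMartingaleDiff_innovation B
  hK.ae_tendsto_sum_div

lemma ae_tendsto_sum_innovation_mul_expVal_div (h : IsMeasTraj M μ ℱ ρ Y)
    (B : Fin n → Matrix (Fin k) (Fin k) ℂ) (A : Matrix (Fin k) (Fin k) ℂ) :
    ∀ᵐ ω ∂μ, Tendsto
      (fun t : ℕ => (∑ s ∈ range t, innovation M ρ Y B s ω * expVal A (ρ s ω)) / t) atTop
      (nhds 0) := by
  obtain ⟨C, hC⟩ := exists_forall_isDensity_abs_expVal_le fun _ : Unit => A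
  obtain ⟨K, hK⟩ := h.exists_isBddMartingaleDiff_innovation B
  have hbound (s : ℕ) : ∀ᵐ ω ∂μ, |expVal A (ρ s ω)| ≤ C := by
    filter_upwards [h.density s] with ω hω using hC () _ hω
  exact (hK.mul_adapted (h.measurable_expVal A) hbound).ae_tendsto_sum_div

-- `B(L(ρ_s) - ρ_s)` is a telescoping term minus the innovation of `B`.
lemma ae_tendsto_expVal_average_channel_sub (h : IsMeasTraj M μ ℱ ρ Y)
    (B : Matrix (Fin k) (Fin k) ℂ) :
    ∀ᵐ ω ∂μ, Tendsto
      (fun t : ℕ => expVal B ((t : ℝ)⁻¹ • ∑ s ∈ range t, (channel M (ρ s ω) - ρ s ω))) atTop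
      (nhds 0) := by
  obtain ⟨C, hC⟩ := exists_forall_isDensity_abs_expVal_le fun _ : Unit => B
  filter_upwards [h.ae_density, h.ae_tendsto_sum_innovation_div fun _ => B] with ω hdens hinnov
  have htele := tendsto_sum_range_sub_div fun s => hC () _ (hdens s)
  refine (sub_zero (0 : ℝ) ▸ htele.sub hinnov).congr fun t => ?_
  rw [← sub_div, ← sum_sub_distrib, map_smul, map_sum, smul_eq_mul, div_eq_inv_mul]
  congr 1
  refine sum_congr rfl fun s _ => ?_
  rw [innovation, map_sub, expVal_channel]
  ring

variable {ρinf : Matrix (Fin k) (Fin k) ℂ}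

lemma ae_tendsto_average_state (h : IsMeasTraj M μ ℱ ρ Y)
    (huniq : ∀ σ, IsDensity σ → channel M σ = σ → σ = ρinf) :
    ∀ᵐ ω ∂μ, Tendsto (fun t : ℕ => (t : ℝ)⁻¹ • ∑ s ∈ range t, ρ s ω) atTop (nhds ρinf) := by
  have hsingle (c : ℂ) := ae_all_iff.2 fun a => ae_all_iff.2 fun b =>
    h.ae_tendsto_expVal_average_channel_sub (single b a c)
  filter_upwards [h.ae_density, hsingle 1, hsingle (-Complex.I)] with ω hdens hre him
  exact tendsto_average_of_unique_fixedPoint isCompact_setOf_isDensity convex_setOf_isDensity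
    (channel M) hdens (tendsto_zero_of_tendsto_expVal_single hre him) huniq

theorem ae_tendsto_average_expVal_outcome (h : IsMeasTraj M μ ℱ ρ Y)
    (huniq : ∀ σ, IsDensity σ → channel M σ = σ → σ = ρinf)
    (B : Fin n → Matrix (Fin k) (Fin k) ℂ) :
    ∀ᵐ ω ∂μ, Tendsto
      (fun t : ℕ => (∑ s ∈ range t, expVal (B (Y (s + 1) ω)) (ρ (s + 1) ω)) / t) atTop
      (nhds (expVal (heisenberg M B) ρinf)) := by
  filter_upwards [h.ae_tendsto_average_state huniq, h.ae_tendsto_sum_innovation_div B]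
    with ω hstate hinnov
  have hmean := ((continuous_expVal (heisenberg M B)).tendsto ρinf).comp hstate
  refine (add_zero (expVal (heisenberg M B) ρinf) ▸ hmean.add hinnov).congr fun t => ?_
  rw [Function.comp_apply, map_smul, map_sum, smul_eq_mul, ← div_eq_inv_mul, ← add_div,
    ← sum_add_distrib]
  simp only [innovation, add_sub_cancel]

-- With `x = a(Y_{s+1})`, `u = A(ρ_s)` and `v = A(ρ_{s+1})`, the squared innovation is
-- `(x + v - u)² = (x² + 2 x v) + (v² - u²) - 2 u (x + v - u)`.
lemma ae_tendsto_sum_innovation_sq_div (h : IsMeasTraj M μ ℱ ρ Y)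
    (huniq : ∀ σ, IsDensity σ → channel M σ = σ → σ = ρinf)
    {a : Fin n → ℝ} {A : Matrix (Fin k) (Fin k) ℂ}
    (hA : heisenberg M (fun i => a i • 1 + A) = A) :
    ∀ᵐ ω ∂μ, Tendsto
      (fun t : ℕ => (∑ s ∈ range t, innovation M ρ Y (fun i => a i • 1 + A) s ω ^ 2) / t) atTop
      (nhds (expVal (heisenberg M fun i => a i ^ 2 • 1 + (2 * a i) • A) ρinf)) := by
  obtain ⟨C, hC⟩ := exists_forall_isDensity_abs_expVal_le fun _ : Unit => A
  filter_upwards [h.ae_density,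
    h.ae_tendsto_sum_innovation_mul_expVal_div (fun i => a i • 1 + A) A,
    h.ae_tendsto_average_expVal_outcome huniq fun i => a i ^ 2 • 1 + (2 * a i) • A]
    with ω hdens hcross hmain
  have htele : Tendsto (fun t : ℕ => (∑ s ∈ range t,
      (expVal A (ρ (s + 1) ω) ^ 2 - expVal A (ρ s ω) ^ 2)) / t) atTop (nhds 0) :=
    tendsto_sum_range_sub_div (u := fun s => expVal A (ρ s ω) ^ 2) (C := C ^ 2) fun s => by
      rw [abs_pow]
      exact pow_le_pow_left₀ (abs_nonneg _) (hC () _ (hdens s)) 2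
  have hsum := (hmain.add htele).sub (hcross.const_mul 2)
  simp only [add_zero, mul_zero, sub_zero] at hsum
  refine hsum.congr fun t => ?_
  rw [← add_div, ← mul_div_assoc, ← sub_div, mul_sum, ← sum_add_distrib, ← sum_sub_distrib]
  congr 1
  refine sum_congr rfl fun s _ => ?_
  rw [innovation_smul_one_add hA s (hdens (s + 1)), (hdens (s + 1)).expVal_smul_one_add, map_smul,
    LinearMap.smul_apply, smul_eq_mul]
  ring

end IsMeasTraj

end Trajectory

/-! ### The Poisson equation and the covariance -/

section Covariance

/-- The weights `l` on the outcomes, centred with respect to the outcome distribution `m`. -/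
def centeredWeight {ι : Type*} [Fintype ι] (m l : ι → ℝ) (i : ι) : ℝ := l i - l ⬝ᵥ m

/-- The combination `∑ i, l i • L i` of the given solutions `L i` of the Poisson equations, which
solves the Poisson equation of the weights `l`. -/
def corrector {ι E : Type*} [Fintype ι] [AddCommMonoid E] [Module ℝ E] (L : ι → E)
    (l : ι → ℝ) : E :=
  ∑ i, l i • L i

lemma heisenberg_smul_one_add {d ι : Type*} [Fintype d] [DecidableEq d] [Fintype ι]
    (M : ι → Matrix d d ℂ) (a : ι → ℝ) (A : Matrix d d ℂ) :
    heisenberg M (fun i => a i • 1 + A)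
      = ∑ i, a i • ((M i)ᴴ * M i) + heisenberg M fun _ => A := by
  simp only [heisenberg, Matrix.mul_add, Matrix.add_mul, sum_add_distrib, Matrix.mul_smul,
    Matrix.smul_mul, Matrix.mul_one]

lemma heisenberg_corrector {d ι : Type*} [Fintype d] [Fintype ι] (M L : ι → Matrix d d ℂ)
    (l : ι → ℝ) :
    heisenberg M (fun _ => corrector L l) = corrector (fun i => heisenberg M fun _ => L i) l := by
  simp only [heisenberg, corrector, Matrix.mul_sum, Matrix.sum_mul, Matrix.mul_smul,
    Matrix.smul_mul, smul_sum]
  exact sum_comm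

lemma heisenberg_centeredWeight_add_corrector {d ι : Type*} [Fintype d] [DecidableEq d]
    [Fintype ι] {M L : ι → Matrix d d ℂ} (hM : ∑ i, (M i)ᴴ * M i = 1) {m : ι → ℝ}
    (hL : ∀ i, L i - heisenberg M (fun _ => L i) = (M i)ᴴ * M i - m i • 1) (l : ι → ℝ) :
    heisenberg M (fun i => centeredWeight m l i • 1 + corrector L l) = corrector L l := by
  have hweights : ∑ i, centeredWeight m l i • ((M i)ᴴ * M i)
      = ∑ i, l i • ((M i)ᴴ * M i - m i • 1) := by
    simp only [centeredWeight, dotProduct, sub_smul, smul_sub, sum_sub_distrib, smul_smul,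
      ← smul_sum, ← sum_smul, hM]
  have hpoisson : ∑ i, l i • ((M i)ᴴ * M i - m i • 1)
      = corrector L l - heisenberg M fun _ => corrector L l := by
    rw [heisenberg_corrector]
    simp only [corrector, ← hL, smul_sub, sum_sub_distrib]
  rw [heisenberg_smul_one_add, hweights, hpoisson, sub_add_cancel]

variable {k n : ℕ} {M L : Fin n → Matrix (Fin k) (Fin k) ℂ} {ρinf : Matrix (Fin k) (Fin k) ℂ}

lemma expVal_corrector (l : Fin n → ℝ) (σ : Matrix (Fin k) (Fin k) ℂ) :
    expVal (corrector L l) σ = ∑ j, l j * expVal (L j) σ := by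
  simp only [corrector, map_sum, map_smul, LinearMap.sum_apply, LinearMap.smul_apply, smul_eq_mul]

lemma Crec_comm (i j : Fin n) : Crec M ρinf L i j = Crec M ρinf L j i := by
  simp only [Crec, eq_comm (a := i) (b := j)]
  split_ifs with hij
  · rw [hij]
  · ring

lemma sum_sum_mul_Crec_mul (l : Fin n → ℝ) :
    ∑ i, ∑ j, l i * Crec M ρinf L i j * l j
      = ∑ i, l i ^ 2 * mrec M ρinf i - (l ⬝ᵥ mrec M ρinf) ^ 2
        + 2 * ∑ i, l i * expVal (corrector L l) (M i * ρinf * (M i)ᴴ)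
        - 2 * (l ⬝ᵥ mrec M ρinf) * expVal (corrector L l) ρinf := by
  set m := mrec M ρinf
  let F (i j : Fin n) : ℝ := expVal (L j) (M i * ρinf * (M i)ᴴ)
  let G (j : Fin n) : ℝ := expVal (L j) ρinf
  have hC (i j : Fin n) : l i * Crec M ρinf L i j * l j
      = (if i = j then l i * m i * l j else 0) - (l i * m i) * (l j * m j)
        + (l i * (l j * F i j) + l j * (l i * F j i))
        - ((l i * m i) * (l j * G j) + (l i * G i) * (l j * m j)) := by
    have hCrec : Crec M ρinf L i j = (if i = j then m i else 0) - m i * m j + (F i j + F j i)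
      - (m i * G j + m j * G i) := rfl
    rw [hCrec]
    split_ifs <;> ring
  have hswap : ∑ i, ∑ j, l j * (l i * F j i) = ∑ i, ∑ j, l i * (l j * F i j) := sum_comm
  have hdiag : ∑ i, ∑ j, (if i = j then l i * m i * l j else 0) = ∑ i, l i ^ 2 * m i := by
    refine sum_congr rfl fun i _ => ?_
    rw [Fintype.sum_ite_eq]
    ring
  simp only [hC, sum_sub_distrib, sum_add_distrib, hdiag, hswap, ← mul_sum, ← sum_mul,
    expVal_corrector, dotProduct, F, G]
  ring

lemma expVal_heisenberg_sq_centeredWeight_add_corrector (hM : ∑ i, (M i)ᴴ * M i = 1)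
    (hρinf : IsDensity ρinf) (hinv : channel M ρinf = ρinf) (l : Fin n → ℝ) :
    expVal (heisenberg M fun i => centeredWeight (mrec M ρinf) l i ^ 2 • 1
        + (2 * centeredWeight (mrec M ρinf) l i) • corrector L l) ρinf
      = ∑ i, ∑ j, l i * Crec M ρinf L i j * l j := by
  set c := l ⬝ᵥ mrec M ρinf with hc
  have hone (i : Fin n) : expVal 1 (M i * ρinf * (M i)ᴴ) = mrec M ρinf i := by
    rw [expVal_apply, Matrix.mul_one, mrec]
  have hdot : ∑ i, l i * mrec M ρinf i = c := rfl
  have hcorr :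
      ∑ i, expVal (corrector L l) (M i * ρinf * (M i)ᴴ) = expVal (corrector L l) ρinf := by
    rw [← map_sum]
    exact congrArg _ hinv
  calc _ = ∑ i, (l i ^ 2 * mrec M ρinf i - 2 * c * (l i * mrec M ρinf i) + c ^ 2 * mrec M ρinf i
          + 2 * (l i * expVal (corrector L l) (M i * ρinf * (M i)ᴴ))
          - 2 * c * expVal (corrector L l) (M i * ρinf * (M i)ᴴ)) := by
        rw [expVal_heisenberg]
        refine sum_congr rfl fun i _ => ?_
        simp only [map_add, map_smul, LinearMap.add_apply, LinearMap.smul_apply, hone,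
          smul_eq_mul, centeredWeight, ← hc]
        ring
    _ = _ := by
        simp only [sum_sub_distrib, sum_add_distrib, ← mul_sum, hdot, hcorr, hρinf.sum_mrec hM,
          sum_sum_mul_Crec_mul, ← hc]
        ring

end Covariance

/-! ### The measurement record -/

section Record

variable {k n : ℕ} {Ω : Type} {mΩ : MeasurableSpace Ω} {μ : Measure Ω}
  {ℱ : Filtration ℕ mΩ} {M L : Fin n → Matrix (Fin k) (Fin k) ℂ}
  {ρ : ℕ → Ω → Matrix (Fin k) (Fin k) ℂ} {Y : ℕ → Ω → Fin n}
  {ρinf : Matrix (Fin k) (Fin k) ℂ}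

/-- The record `S_t = ∑_{1 ≤ s ≤ t} X_s`: its `i`-th coordinate counts the outcomes `i` up to
time `t`. -/
def outcomeCount {ι : Type*} [DecidableEq ι] (Y : ℕ → Ω → ι) (t : ℕ) (ω : Ω) (i : ι) : ℝ :=
  #{s ∈ Icc 1 t | Y s ω = i}

lemma outcomeCount_eq_sum {ι : Type*} [DecidableEq ι] (Y : ℕ → Ω → ι) (t : ℕ) (ω : Ω) (i : ι) :
    outcomeCount Y t ω i = ∑ s ∈ range t, if Y (s + 1) ω = i then 1 else 0 := by
  rw [outcomeCount, card_filter, Nat.cast_sum, range_eq_Ico,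
    sum_Ico_add' (fun s => if Y s ω = i then (1 : ℝ) else 0) 0 t 1]
  simp only [Nat.cast_ite, Nat.cast_one, Nat.cast_zero]
  rfl

lemma sum_mul_outcomeCount_sub {ι : Type*} [Fintype ι] [DecidableEq ι] (Y : ℕ → Ω → ι)
    (m l : ι → ℝ) (t : ℕ) (ω : Ω) :
    ∑ i, l i * (outcomeCount Y t ω i - t * m i)
      = ∑ s ∈ range t, centeredWeight m l (Y (s + 1) ω) := by
  have hcount : ∑ i, l i * outcomeCount Y t ω i = ∑ s ∈ range t, l (Y (s + 1) ω) := by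
    simp_rw [outcomeCount_eq_sum, mul_sum]
    rw [sum_comm]
    simp
  have hdrift : ∑ i, l i * (t * m i) = t * (l ⬝ᵥ m) := by
    simp only [dotProduct, mul_sum, mul_left_comm]
  simp only [mul_sub, sum_sub_distrib, centeredWeight, hcount, hdrift, sum_const, card_range,
    nsmul_eq_mul]

namespace IsMeasTraj

lemma measurable_outcomeCount (h : IsMeasTraj M μ ℱ ρ Y) (t : ℕ) :
    Measurable (outcomeCount Y t) := by
  refine measurable_pi_lambda _ fun i => ?_
  simp only [outcomeCount_eq_sum]
  exact Finset.measurable_fun_sum _ fun s _ =>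
    (h.measurable_indicator (s + 1) i).mono (ℱ.le _) le_rfl

variable [IsProbabilityMeasure μ]

theorem ae_tendsto_outcomeCount_div (h : IsMeasTraj M μ ℱ ρ Y)
    (huniq : ∀ σ, IsDensity σ → channel M σ = σ → σ = ρinf) :
    ∀ᵐ ω ∂μ, Tendsto (fun t : ℕ => fun i => outcomeCount Y t ω i / t) atTop
      (nhds (mrec M ρinf)) := by
  have hcoord := ae_all_iff.2 fun i => h.ae_tendsto_average_expVal_outcome huniq
    fun j => if j = i then 1 else 0
  filter_upwards [h.ae_density, hcoord] with ω hdens hcoord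
  refine tendsto_pi_nhds.2 fun i => ?_
  have hlimit : expVal (heisenberg M fun j => if j = i then 1 else 0) ρinf = mrec M ρinf i := by
    have hheis : heisenberg M (fun j => if j = i then 1 else 0) = (M i)ᴴ * 1 * M i := by
      simp [heisenberg]
    rw [hheis, ← expVal_conj, expVal_apply, Matrix.mul_one, mrec]
  refine (hlimit ▸ hcoord i).congr fun t => ?_
  rw [outcomeCount_eq_sum]
  congr 1
  refine sum_congr rfl fun s _ => ?_
  split_ifs
  · exact (hdens (s + 1)).expVal_one
  · rw [map_zero, LinearMap.zero_apply]

theorem ae_tendsto_quadraticVariation (h : IsMeasTraj M μ ℱ ρ Y)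
    (hM : ∑ i, (M i)ᴴ * M i = 1) (hρinf : IsDensity ρinf) (hinv : channel M ρinf = ρinf)
    (huniq : ∀ σ, IsDensity σ → channel M σ = σ → σ = ρinf)
    (hL : ∀ i, L i - heisenberg M (fun _ => L i) = (M i)ᴴ * M i - mrec M ρinf i • 1)
    (l : Fin n → ℝ) :
    ∀ᵐ ω ∂μ, Tendsto (fun t : ℕ => (∑ s ∈ range t, innovation M ρ Y
        (fun i => centeredWeight (mrec M ρinf) l i • 1 + corrector L l) s ω ^ 2) / t) atTop
      (nhds (∑ i, ∑ j, l i * Crec M ρinf L i j * l j)) := by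
  rw [← expVal_heisenberg_sq_centeredWeight_add_corrector hM hρinf hinv]
  exact h.ae_tendsto_sum_innovation_sq_div huniq (heisenberg_centeredWeight_add_corrector hM hL l)

theorem posSemidef_Crec (h : IsMeasTraj M μ ℱ ρ Y)
    (hM : ∑ i, (M i)ᴴ * M i = 1) (hρinf : IsDensity ρinf) (hinv : channel M ρinf = ρinf)
    (huniq : ∀ σ, IsDensity σ → channel M σ = σ → σ = ρinf)
    (hL : ∀ i, L i - heisenberg M (fun _ => L i) = (M i)ᴴ * M i - mrec M ρinf i • 1) :
    (Matrix.of fun i j => Crec M ρinf L i j).PosSemidef := by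
  refine PosSemidef.of_dotProduct_mulVec_nonneg (IsHermitian.ext fun i j => Crec_comm j i)
    fun l => ?_
  obtain ⟨ω, hω⟩ := (h.ae_tendsto_quadraticVariation hM hρinf hinv huniq hL l).exists
  have hnonneg : 0 ≤ ∑ i, ∑ j, l i * Crec M ρinf L i j * l j :=
    ge_of_tendsto' hω fun t => by positivity
  simpa [dotProduct, mulVec, mul_sum, mul_assoc] using hnonneg

theorem tendsto_integral_cexp_outcomeCount (h : IsMeasTraj M μ ℱ ρ Y)
    (hM : ∑ i, (M i)ᴴ * M i = 1) (hρinf : IsDensity ρinf) (hinv : channel M ρinf = ρinf)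
    (huniq : ∀ σ, IsDensity σ → channel M σ = σ → σ = ρinf)
    (hL : ∀ i, L i - heisenberg M (fun _ => L i) = (M i)ᴴ * M i - mrec M ρinf i • 1)
    (l : Fin n → ℝ) :
    Tendsto (fun t : ℕ => ∫ ω, Complex.exp (Complex.I *
        ((∑ i, l i * ((outcomeCount Y t ω i - t * mrec M ρinf i) / √t) : ℝ) : ℂ)) ∂μ) atTop
      (nhds (Complex.exp (-(((∑ i, ∑ j, l i * Crec M ρinf L i j * l j) / 2 : ℝ) : ℂ)))) := by
  have hpoisson := heisenberg_centeredWeight_add_corrector hM hL l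
  obtain ⟨K, hK⟩ := h.exists_isBddMartingaleDiff_innovation
    fun i => centeredWeight (mrec M ρinf) l i • 1 + corrector L l
  obtain ⟨C, hC⟩ := h.exists_ae_abs_sum_innovation_sub_sum_le hpoisson
  have hmartingale := hK.tendsto_integral_cexp_sum_div_sqrt
    (h.ae_tendsto_quadraticVariation hM hρinf hinv huniq hL l)
  simp only [mul_div_assoc', ← sum_div, sum_mul_outcomeCount_sub]
  refine tendsto_integral_cexp_div_sqrt_congr (fun t => (hK.measurable_sum t).mono (ℱ.le _) le_rfl)
    (fun t => ?_) hC hmartingale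
  simp only [← sum_mul_outcomeCount_sub]
  have := h.measurable_outcomeCount t
  fun_prop

end IsMeasTraj

end Record

/-- (Central Limit Theorem for quantum measurement records.) If the
quantum channel `L(ρ) = Σ_i M_i ρ M_i^*` has a unique invariant state `ρ_∞`, the record
`S_t = Σ_{s≤t} X_s` of the successive measurement outcomes satisfies `S_t/t → m` a.s.
and `(S_t − t m)/√t` converges in distribution to `N(0, C)` on `ℝ^n` (characterized by
its characteristic function), `C` being symmetric positive semidefinite. -/
theorem stmt14 {k n : ℕ} (hk : 1 ≤ k) (hn : 1 ≤ n)
    (Mk : Fin n → Matrix (Fin k) (Fin k) ℂ)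
    (hMk : ∑ i, (Mk i)ᴴ * Mk i = 1)
    (ρinf : Matrix (Fin k) (Fin k) ℂ) (hρinf : IsDensity ρinf)
    (hinv : (∑ i, Mk i * ρinf * (Mk i)ᴴ) = ρinf)
    (huniq : ∀ σ, IsDensity σ → (∑ i, Mk i * σ * (Mk i)ᴴ) = σ → σ = ρinf)
    (LL : Fin n → Matrix (Fin k) (Fin k) ℂ)
    (hLL : ∀ i : Fin n,
      LL i - (∑ j, (Mk j)ᴴ * LL i * Mk j) =
        (Mk i)ᴴ * Mk i - mrec Mk ρinf i • (1 : Matrix (Fin k) (Fin k) ℂ))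
    {Ω : Type} {mΩ : MeasurableSpace Ω} (μ : Measure Ω) [IsProbabilityMeasure μ]
    (ℱ : Filtration ℕ mΩ)
    (ρ : ℕ → Ω → Matrix (Fin k) (Fin k) ℂ) (Y : ℕ → Ω → Fin n)
    (hQT : IsMeasTraj Mk μ ℱ ρ Y)
    (S : ℕ → Ω → Fin n → ℝ)
    (hS : ∀ t ω i, S t ω i = (((Finset.Icc 1 t).filter (fun s => Y s ω = i)).card : ℝ)) :
    (∀ᵐ ω ∂μ,
      Tendsto (fun t : ℕ => fun i => S t ω i / t) atTop (nhds (mrec Mk ρinf))) ∧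
    (∀ i j, Crec Mk ρinf LL i j = Crec Mk ρinf LL j i) ∧
    Matrix.PosSemidef (Matrix.of fun i j => Crec Mk ρinf LL i j) ∧
    ∃ ν : Measure (Fin n → ℝ), IsProbabilityMeasure ν ∧
      (∀ l : Fin n → ℝ,
        ∫ x, Complex.exp (Complex.I * ((∑ i, l i * x i : ℝ) : ℂ)) ∂ν =
          Complex.exp (-(((∑ i, ∑ j, l i * Crec Mk ρinf LL i j * l j) / 2 : ℝ) : ℂ))) ∧
      ∀ f : BoundedContinuousFunction (Fin n → ℝ) ℝ,
        Tendsto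
          (fun t : ℕ =>
            ∫ ω, f (fun i => (S t ω i - t * mrec Mk ρinf i) / Real.sqrt t) ∂μ)
          atTop (nhds (∫ x, f x ∂ν)) := by
  obtain rfl : S = outcomeCount Y := funext fun t => funext fun ω => funext fun i => hS t ω i
  have hpsd := hQT.posSemidef_Crec hMk hρinf hinv huniq hLL
  refine ⟨hQT.ae_tendsto_outcomeCount_div huniq, Crec_comm, hpsd,
    gaussianPi (Matrix.of fun i j => Crec Mk ρinf LL i j), inferInstance,
    integral_cexp_gaussianPi hpsd, tendsto_integral_comp_of_tendsto_integral_cexp ?_ fun l => ?_⟩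
  · intro t
    have := hQT.measurable_outcomeCount t
    fun_prop
  · rw [integral_cexp_gaussianPi hpsd]
    exact hQT.tendsto_integral_cexp_outcomeCount hMk hρinf hinv huniq hLL l
end
end

section
/- Assume the block-diagonal hypothesis (H1'): ℂ^k = E_1 ⊕ … ⊕ E_N is an orthogonal direct sum and P_j A_i = A_i P_j for all i = 1,…,2d and j = 1,…,N, where P_j is the orthogonal projection onto E_j. Let (ρ_n, X_n)_{n≥0} be the quantum trajectory process of the open quantum random walk, with filtration F_n = σ((ρ_k, X_k); k ≤ n), and set p_n^{(j)} = Tr(P_j ρ_n). Then for each j, the process (p_n^{(j)})_{n≥0} is a real-valued martingale with respect to (F_n), taking values in [0,1]. -/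
open MeasureTheory Filter Matrix Finset
open scoped ComplexOrder

noncomputable section

/-- The direction vectors `e_1, …, e_{2d}` in `ℤ^d`, with `e_{d+j} = -e_j`. -/
def dir (d : ℕ) (i : Fin (2 * d)) : Fin d → ℤ :=
  fun j => if (i : ℕ) < d then (if (j : ℕ) = (i : ℕ) then 1 else 0)
           else (if (j : ℕ) = (i : ℕ) - d then -1 else 0)

/-- The direction vectors viewed in `ℝ^d`. -/
def dirR (d : ℕ) (i : Fin (2 * d)) : Fin d → ℝ := fun j => (dir d i j : ℝ)

/-- The quantum trajectory process of the open quantum random walk. -/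
structure IsQTraj {k d : ℕ} {Ω : Type} {mΩ : MeasurableSpace Ω}
    (A : Fin (2 * d) → Matrix (Fin k) (Fin k) ℂ)
    (μ : Measure Ω) (ℱ : Filtration ℕ mΩ)
    (ρ : ℕ → Ω → Matrix (Fin k) (Fin k) ℂ)
    (X : ℕ → Ω → Fin d → ℤ) : Prop where
  density : ∀ n, ∀ᵐ ω ∂μ, IsDensity (ρ n ω)
  adapted_ρ : ∀ n, Measurable[ℱ n] (ρ n)
  adapted_X : ∀ n, Measurable[ℱ n] (X n)
  prob : ∀ (n : ℕ) (j : Fin (2 * d)),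
    μ[(fun ω => if X (n + 1) ω = X n ω + dir d j then (1 : ℝ) else 0) | ℱ n]
      =ᵐ[μ] fun ω => ((A j * ρ n ω * (A j)ᴴ).trace).re
  update : ∀ (n : ℕ) (j : Fin (2 * d)), ∀ᵐ ω ∂μ,
    X (n + 1) ω = X n ω + dir d j →
      ρ (n + 1) ω = ((A j * ρ n ω * (A j)ᴴ).trace)⁻¹ • (A j * ρ n ω * (A j)ᴴ)

/-!
On the event that step `n + 1` goes in direction `e_i`, the observable `Tr(P ρ_{n+1})` equals the
`F_n`-measurable quantity `Tr(P A_i ρ_n A_i^*) / Tr(A_i ρ_n A_i^*)`. The denominator is the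
conditional probability of that event, so it cancels in the conditional expectation (where it
vanishes, `A_i ρ_n A_i^* = 0` and the numerator vanishes too):
`E[Tr(P ρ_{n+1}) | F_n] = Σ_i Tr(P A_i ρ_n A_i^*) = Tr((Σ_i A_i^* P A_i) ρ_n)`.
Hence `Tr(P ρ_n)` is a martingale as soon as `P` is a fixed point of the dual channel
`P ↦ Σ_i A_i^* P A_i`, and a projection commuting with every `A_i` is such a fixed point.
-/

section Trace

variable {n : Type*} [Fintype n]

lemma trace_mul_mul_mul_conjTranspose {m R : Type*} [Fintype m] [CommSemiring R] [Star R]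
    (P : Matrix m m R) (A : Matrix m n R) (B : Matrix n n R) :
    (P * (A * B * Aᴴ)).trace = (Aᴴ * P * A * B).trace := by
  rw [← Matrix.mul_assoc, Matrix.trace_mul_comm]
  simp only [Matrix.mul_assoc]

lemma sum_trace_mul_mul_mul_conjTranspose {ι m R : Type*} [Fintype ι] [Fintype m]
    [CommSemiring R] [Star R] (P : Matrix m m R) (A : ι → Matrix m n R) (B : Matrix n n R) :
    ∑ i, (P * (A i * B * (A i)ᴴ)).trace = ((∑ i, (A i)ᴴ * P * A i) * B).trace := by
  simp_rw [trace_mul_mul_mul_conjTranspose, Finset.sum_mul, Matrix.trace_sum]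

lemma sum_conjTranspose_mul_mul_eq_self {ι R : Type*} [Fintype ι] [DecidableEq n] [Semiring R]
    [Star R] {A : ι → Matrix n n R} (hA : ∑ i, (A i)ᴴ * A i = 1) {P : Matrix n n R}
    (hP : ∀ i, Commute P (A i)) : ∑ i, (A i)ᴴ * P * A i = P := by
  simp_rw [Matrix.mul_assoc, (hP _).eq, ← Matrix.mul_assoc, ← Finset.sum_mul, hA, one_mul]

section RCLike

variable {𝕜 : Type*} [RCLike 𝕜] {P Q B : Matrix n n 𝕜}

open scoped MatrixOrder in
lemma posSemidef_of_isStarProjection (hP : IsStarProjection P) : P.PosSemidef :=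
  Matrix.nonneg_iff_posSemidef.1 hP.nonneg

open scoped MatrixOrder in
lemma trace_mul_nonneg (hP : P.PosSemidef) (hB : B.PosSemidef) : 0 ≤ (P * B).trace := by
  classical
  obtain ⟨C, rfl⟩ := CStarAlgebra.nonneg_iff_eq_star_mul_self.1 hP.nonneg
  have h_eq : (Cᴴ * C * B).trace = (C * B * Cᴴ).trace := by
    rw [Matrix.mul_assoc, Matrix.trace_mul_comm]
  exact h_eq ▸ (hB.mul_mul_conjTranspose_same C).trace_nonneg

lemma trace_mul_le_trace_mul (hPQ : (Q - P).PosSemidef) (hB : B.PosSemidef) :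
    (P * B).trace ≤ (Q * B).trace := by
  rw [← sub_nonneg, ← Matrix.trace_sub, ← sub_mul]
  exact trace_mul_nonneg hPQ hB

lemma trace_inv_mul_trace_mul_cancel (hB : B.PosSemidef) :
    B.trace⁻¹ * (P * B).trace * B.trace = (P * B).trace := by
  by_cases h_trace : B.trace = 0
  · simp [hB.trace_eq_zero_iff.1 h_trace]
  · field_simp

end RCLike

variable {P B : Matrix n n ℂ}

lemma ofReal_re_trace (hB : B.PosSemidef) : (B.trace.re : ℂ) = B.trace :=
  Complex.ext rfl (Complex.le_def.1 hB.trace_nonneg).2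

lemma re_trace_inv_smul_mul_re_trace (hB : B.PosSemidef) :
    (P * (B.trace⁻¹ • B)).trace.re * B.trace.re = (P * B).trace.re := by
  rw [← Complex.re_mul_ofReal, ofReal_re_trace hB, Matrix.mul_smul, Matrix.trace_smul, smul_eq_mul,
    trace_inv_mul_trace_mul_cancel hB]

open scoped ComplexStarModule in
lemma re_trace_realPart_mul (hB : B.IsHermitian) :
    ((ℜ P : Matrix n n ℂ) * B).trace.re = (P * B).trace.re := by
  have h_star : (Pᴴ * B).trace = star (P * B).trace := by
    rw [← Matrix.trace_conjTranspose, Matrix.conjTranspose_mul, hB.eq, Matrix.trace_mul_comm]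
  rw [realPart_apply_coe, Matrix.star_eq_conjTranspose, Matrix.smul_mul, Matrix.trace_smul,
    add_mul, Matrix.trace_add, h_star, Complex.smul_re, Complex.add_re, Complex.star_def,
    Complex.conj_re, smul_eq_mul]
  ring

open scoped ComplexStarModule MatrixOrder Matrix.Norms.L2Operator in
lemma exists_abs_re_trace_mul_le (P : Matrix n n ℂ) :
    ∃ c : ℝ, ∀ B : Matrix n n ℂ, B.PosSemidef → |(P * B).trace.re| ≤ c * B.trace.re := by
  classical
  -- In the Loewner order, `-‖ℜ P‖ ≤ ℜ P ≤ ‖ℜ P‖`.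
  refine ⟨‖(ℜ P : Matrix n n ℂ)‖, fun B hB => ?_⟩
  have h_smul (c : ℝ) : (algebraMap ℝ (Matrix n n ℂ) c * B).trace.re = c * B.trace.re := by
    rw [Algebra.algebraMap_eq_smul_one, Matrix.smul_mul, one_mul, Matrix.trace_smul,
      Complex.smul_re, smul_eq_mul]
  have h_upper := (Complex.le_def.1 <| trace_mul_le_trace_mul
    (Matrix.le_iff.1 (ℜ P).2.le_algebraMap_norm_self) hB).1
  have h_lower := (Complex.le_def.1 <| trace_mul_le_trace_mul
    (Matrix.le_iff.1 (ℜ P).2.neg_algebraMap_norm_le_self) hB).1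
  rw [neg_mul, Matrix.trace_neg, Complex.neg_re, h_smul, re_trace_realPart_mul hB.1] at h_lower
  rw [h_smul, re_trace_realPart_mul hB.1] at h_upper
  exact abs_le.2 ⟨h_lower, h_upper⟩

end Trace

lemma measurable_trace_mul {k : ℕ} {Ω : Type*} {mΩ : MeasurableSpace Ω}
    (P : Matrix (Fin k) (Fin k) ℂ) {R : Ω → Matrix (Fin k) (Fin k) ℂ} (hR : Measurable R) :
    Measurable fun ω => (P * R ω).trace := by
  have h_entry (i j : Fin k) : Measurable fun ω => R ω i j :=
    (measurable_pi_apply j).comp ((measurable_pi_apply i).comp hR)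
  simp only [Matrix.trace, Matrix.diag, Matrix.mul_apply]
  fun_prop

lemma condExp_ae_eq_sum_mul_condExp_indicator {Ω ι : Type*} [Fintype ι] {m mΩ : MeasurableSpace Ω}
    {μ : Measure Ω} [IsFiniteMeasure μ] {S : ι → Set Ω} (hS : ∀ i, MeasurableSet (S i))
    (h_disj : Pairwise (Function.onFun Disjoint S)) (h_cover : ∀ᵐ ω ∂μ, ∃ i, ω ∈ S i)
    {f : Ω → ℝ} (hf : Integrable f μ) {g : ι → Ω → ℝ} (hg : ∀ i, StronglyMeasurable[m] (g i))
    (hfg : ∀ i, ∀ᵐ ω ∂μ, ω ∈ S i → f ω = g i ω) :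
    μ[f | m] =ᵐ[μ] fun ω => ∑ i, g i ω * μ[(S i).indicator 1 | m] ω := by
  have h_restrict (i : ι) : (S i).indicator f =ᵐ[μ] g i * (S i).indicator 1 := by
    filter_upwards [hfg i] with ω hω
    by_cases hi : ω ∈ S i <;> simp [hi, hω]
  have h_split : f =ᵐ[μ] ∑ i, g i * (S i).indicator 1 := by
    filter_upwards [h_cover, ae_all_iff.2 h_restrict] with ω ⟨i, hi⟩ h_restrict
    rw [Finset.sum_apply, ← Finset.sum_congr rfl fun j _ => h_restrict j,
      Finset.sum_eq_single_of_mem i (Finset.mem_univ i), Set.indicator_of_mem hi]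
    exact fun j _ hji =>
      Set.indicator_of_notMem (fun hj => Set.disjoint_left.1 (h_disj hji) hj hi) f
  have h_int (i : ι) : Integrable (g i * (S i).indicator 1) μ :=
    (hf.indicator (hS i)).congr (h_restrict i)
  have h_pull (i : ι) : μ[g i * (S i).indicator 1 | m] =ᵐ[μ] g i * μ[(S i).indicator 1 | m] :=
    condExp_mul_of_stronglyMeasurable_left (hg i) (h_int i)
      ((integrable_const (1 : ℝ)).indicator (hS i))
  calc μ[f | m] =ᵐ[μ] μ[∑ i, g i * (S i).indicator 1 | m] := condExp_congr_ae h_split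
    _ =ᵐ[μ] ∑ i, μ[g i * (S i).indicator 1 | m] := condExp_finsetSum (fun i _ => h_int i) m
    _ =ᵐ[μ] fun ω => ∑ i, g i ω * μ[(S i).indicator 1 | m] ω := by
      filter_upwards [ae_all_iff.2 h_pull] with ω hω
      rw [Finset.sum_apply]
      exact Finset.sum_congr rfl fun i _ => hω i

lemma dir_injective (d : ℕ) : Function.Injective (dir d) := by
  intro i j h
  have hi := i.2
  ext
  by_cases h_pos : (i : ℕ) < d
  · have h_coord := congrFun h ⟨i, h_pos⟩
    simp only [dir, h_pos, if_true] at h_coord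
    split_ifs at h_coord <;> omega
  · have h_coord := congrFun h ⟨i - d, by omega⟩
    simp only [dir, h_pos, if_true, if_false] at h_coord
    split_ifs at h_coord
    omega

/-- The event that the walk `X` moves in direction `e_i` between times `n` and `n + 1`. -/
def stepEvent {Ω : Type*} {d : ℕ} (X : ℕ → Ω → Fin d → ℤ) (n : ℕ) (i : Fin (2 * d)) : Set Ω :=
  {ω | X (n + 1) ω = X n ω + dir d i}

lemma pairwise_disjoint_stepEvent {Ω : Type*} {d : ℕ} (X : ℕ → Ω → Fin d → ℤ) (n : ℕ) :
    Pairwise (Function.onFun Disjoint (stepEvent X n)) := fun _ _ hij =>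
  Set.disjoint_left.2 fun _ hi hj =>
    hij (dir_injective d (add_left_cancel (Eq.trans (Eq.symm hi) hj)))

namespace IsQTraj

variable {k d : ℕ} {Ω : Type} {mΩ : MeasurableSpace Ω} {A : Fin (2 * d) → Matrix (Fin k) (Fin k) ℂ}
  {μ : Measure Ω} {ℱ : Filtration ℕ mΩ} {ρ : ℕ → Ω → Matrix (Fin k) (Fin k) ℂ}
  {X : ℕ → Ω → Fin d → ℤ}

lemma measurableSet_stepEvent (hQT : IsQTraj A μ ℱ ρ X) (n : ℕ) (i : Fin (2 * d)) :
    MeasurableSet (stepEvent X n i) :=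
  measurableSet_eq_fun ((hQT.adapted_X (n + 1)).mono (ℱ.le _) le_rfl)
    (((hQT.adapted_X n).mono (ℱ.le _) le_rfl).add_const _)

lemma condExp_indicator_stepEvent (hQT : IsQTraj A μ ℱ ρ X) (n : ℕ) (i : Fin (2 * d)) :
    μ[(stepEvent X n i).indicator (1 : Ω → ℝ) | ℱ n]
      =ᵐ[μ] fun ω => (A i * ρ n ω * (A i)ᴴ).trace.re := by
  have h_ite : (stepEvent X n i).indicator (1 : Ω → ℝ)
      = fun ω => if X (n + 1) ω = X n ω + dir d i then 1 else 0 := by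
    ext ω
    simp [Set.indicator_apply, stepEvent]
  exact h_ite ▸ hQT.prob n i

lemma stronglyMeasurable_re_trace_mul (hQT : IsQTraj A μ ℱ ρ X)
    (P : Matrix (Fin k) (Fin k) ℂ) (n : ℕ) :
    StronglyMeasurable[ℱ n] fun ω => (P * ρ n ω).trace.re :=
  (Complex.measurable_re.comp (measurable_trace_mul P (hQT.adapted_ρ n))).stronglyMeasurable

section FiniteMeasure

variable [IsFiniteMeasure μ]

lemma measureReal_stepEvent (hQT : IsQTraj A μ ℱ ρ X) (n : ℕ) (i : Fin (2 * d)) :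
    μ.real (stepEvent X n i) = ∫ ω, (A i * ρ n ω * (A i)ᴴ).trace.re ∂μ := by
  rw [← integral_indicator_one (hQT.measurableSet_stepEvent n i), ← integral_condExp (ℱ.le n)]
  exact integral_congr_ae (hQT.condExp_indicator_stepEvent n i)

lemma ae_exists_mem_stepEvent (hQT : IsQTraj A μ ℱ ρ X) (hA : ∑ i, (A i)ᴴ * A i = 1) (n : ℕ) :
    ∀ᵐ ω ∂μ, ∃ i, ω ∈ stepEvent X n i := by
  have h_meas := hQT.measurableSet_stepEvent n
  have h_int (i : Fin (2 * d)) : Integrable (fun ω => (A i * ρ n ω * (A i)ᴴ).trace.re) μ :=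
    integrable_condExp.congr (hQT.condExp_indicator_stepEvent n i)
  have h_sum : ∀ᵐ ω ∂μ, ∑ i, (A i * ρ n ω * (A i)ᴴ).trace.re = 1 := by
    filter_upwards [hQT.density n] with ω hω
    have h_trace := sum_trace_mul_mul_mul_conjTranspose 1 A (ρ n ω)
    simp only [one_mul, mul_one, hA, hω.2] at h_trace
    rw [← Complex.re_sum, h_trace, Complex.one_re]
  have h_real : μ.real (⋃ i, stepEvent X n i) = μ.real Set.univ := by
    rw [measureReal_iUnion_fintype (pairwise_disjoint_stepEvent X n) h_meas,
      Finset.sum_congr rfl fun i _ => hQT.measureReal_stepEvent n i,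
      ← integral_finsetSum _ fun i _ => h_int i, integral_congr_ae h_sum]
    simp
  have h_univ : μ (⋃ i, stepEvent X n i) = μ Set.univ :=
    (measureReal_eq_measureReal_iff (measure_ne_top _ _) (measure_ne_top _ _)).1 h_real
  rw [← ae_eq_univ_iff_measure_eq (MeasurableSet.iUnion h_meas).nullMeasurableSet,
    eventuallyEq_univ] at h_univ
  filter_upwards [h_univ] with ω hω using Set.mem_iUnion.1 hω

lemma integrable_re_trace_mul (hQT : IsQTraj A μ ℱ ρ X) (P : Matrix (Fin k) (Fin k) ℂ) (n : ℕ) :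
    Integrable (fun ω => (P * ρ n ω).trace.re) μ := by
  obtain ⟨c, hc⟩ := exists_abs_re_trace_mul_le P
  refine .of_bound ((hQT.stronglyMeasurable_re_trace_mul P n).mono (ℱ.le n)).aestronglyMeasurable
    c ?_
  filter_upwards [hQT.density n] with ω hω
  simpa [hω.2] using hc (ρ n ω) hω.1

lemma condExp_re_trace_mul_succ (hQT : IsQTraj A μ ℱ ρ X) (hA : ∑ i, (A i)ᴴ * A i = 1)
    (P : Matrix (Fin k) (Fin k) ℂ) (n : ℕ) :
    μ[fun ω => (P * ρ (n + 1) ω).trace.re | ℱ n]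
      =ᵐ[μ] fun ω => ((∑ i, (A i)ᴴ * P * A i) * ρ n ω).trace.re := by
  set B : Fin (2 * d) → Ω → Matrix (Fin k) (Fin k) ℂ := fun i ω => A i * ρ n ω * (A i)ᴴ
  have h_meas (i : Fin (2 * d)) :
      StronglyMeasurable[ℱ n] fun ω => (P * ((B i ω).trace⁻¹ • B i ω)).trace.re := by
    have h_trace (Q : Matrix (Fin k) (Fin k) ℂ) : Measurable[ℱ n] fun ω => (Q * B i ω).trace := by
      simp only [B, trace_mul_mul_mul_conjTranspose]
      exact measurable_trace_mul _ (hQT.adapted_ρ n)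
    simp only [Matrix.mul_smul, Matrix.trace_smul, smul_eq_mul]
    refine (Complex.measurable_re.comp (Measurable.mul (.inv ?_) (h_trace P))).stronglyMeasurable
    simpa only [one_mul] using h_trace 1
  have h_step (i : Fin (2 * d)) : ∀ᵐ ω ∂μ, ω ∈ stepEvent X n i →
      (P * ρ (n + 1) ω).trace.re = (P * ((B i ω).trace⁻¹ • B i ω)).trace.re := by
    filter_upwards [hQT.update n i] with ω hω hi using by rw [hω hi]
  refine (condExp_ae_eq_sum_mul_condExp_indicator (hQT.measurableSet_stepEvent n)
    (pairwise_disjoint_stepEvent X n) (hQT.ae_exists_mem_stepEvent hA n)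
    (hQT.integrable_re_trace_mul P (n + 1)) h_meas h_step).trans ?_
  filter_upwards [hQT.density n, ae_all_iff.2 (hQT.condExp_indicator_stepEvent n)] with ω hω h_prob
  rw [← sum_trace_mul_mul_mul_conjTranspose, Complex.re_sum]
  refine Finset.sum_congr rfl fun i _ => ?_
  rw [h_prob i]
  exact re_trace_inv_smul_mul_re_trace (hω.1.mul_mul_conjTranspose_same (A i))

lemma martingale_re_trace_mul (hQT : IsQTraj A μ ℱ ρ X) (hA : ∑ i, (A i)ᴴ * A i = 1)
    {P : Matrix (Fin k) (Fin k) ℂ} (hP : ∑ i, (A i)ᴴ * P * A i = P) :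
    Martingale (fun n ω => (P * ρ n ω).trace.re) ℱ μ := by
  refine martingale_nat (hQT.stronglyMeasurable_re_trace_mul P) (hQT.integrable_re_trace_mul P)
    fun n => ?_
  simpa only [hP] using (hQT.condExp_re_trace_mul_succ hA P n).symm

end FiniteMeasure

end IsQTraj

theorem stmt15_general {k d : ℕ} {A : Fin (2 * d) → Matrix (Fin k) (Fin k) ℂ}
    (hA : ∑ i, (A i)ᴴ * A i = 1) {P : Matrix (Fin k) (Fin k) ℂ} (hP : P.PosSemidef)
    (hP_le : (1 - P).PosSemidef) (hP_fix : ∑ i, (A i)ᴴ * P * A i = P)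
    {Ω : Type} {mΩ : MeasurableSpace Ω} {μ : Measure Ω} [IsFiniteMeasure μ] {ℱ : Filtration ℕ mΩ}
    {ρ : ℕ → Ω → Matrix (Fin k) (Fin k) ℂ} {X : ℕ → Ω → Fin d → ℤ} (hQT : IsQTraj A μ ℱ ρ X) :
    Martingale (fun n ω => (P * ρ n ω).trace.re) ℱ μ ∧
      ∀ n, ∀ᵐ ω ∂μ, 0 ≤ (P * ρ n ω).trace.re ∧ (P * ρ n ω).trace.re ≤ 1 := by
  refine ⟨hQT.martingale_re_trace_mul hA hP_fix, fun n => ?_⟩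
  filter_upwards [hQT.density n] with ω hω
  exact ⟨(Complex.le_def.1 (trace_mul_nonneg hP hω.1)).1,
    by simpa [hω.2] using (Complex.le_def.1 (trace_mul_le_trace_mul hP_le hω.1)).1⟩

/-- Under the block-diagonal hypothesis (H1'), for each `j` the process
`p_n^{(j)} = Tr(P_j ρ_n)` is a real-valued martingale with values in `[0,1]`. -/
theorem stmt15 {k d N : ℕ} (hd : 1 ≤ d)
    (A : Fin (2 * d) → Matrix (Fin k) (Fin k) ℂ)
    (hA : ∑ j, (A j)ᴴ * A j = 1)
    (P : Fin N → Matrix (Fin k) (Fin k) ℂ)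
    (hsa : ∀ j, (P j)ᴴ = P j) (hidem : ∀ j, P j * P j = P j)
    (horth : ∀ j j', j ≠ j' → P j * P j' = 0)
    (hsum : ∑ j, P j = 1)
    (hcomm : ∀ (i : Fin (2 * d)) (j : Fin N), P j * A i = A i * P j)
    {Ω : Type} {mΩ : MeasurableSpace Ω} (μ : Measure Ω) [IsProbabilityMeasure μ]
    (ℱ : Filtration ℕ mΩ)
    (ρ : ℕ → Ω → Matrix (Fin k) (Fin k) ℂ) (X : ℕ → Ω → Fin d → ℤ)
    (hQT : IsQTraj A μ ℱ ρ X) :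
    ∀ j : Fin N,
      Martingale (fun n ω => ((P j * ρ n ω).trace).re) ℱ μ ∧
      ∀ n, ∀ᵐ ω ∂μ,
        0 ≤ ((P j * ρ n ω).trace).re ∧ ((P j * ρ n ω).trace).re ≤ 1 := by
  intro j
  have hP : IsStarProjection (P j) := ⟨hidem j, hsa j⟩
  exact stmt15_general hA (posSemidef_of_isStarProjection hP)
    (posSemidef_of_isStarProjection hP.one_sub)
    (sum_conjTranspose_mul_mul_eq_self hA fun i => hcomm i j) hQT
end
end

section
/- (Restriction under the h-process.) Assume the block-diagonal hypothesis (H1'), fix j ∈ {1,…,N}, and let (ρ_n, X_n)_{n≥0} be the quantum trajectory process under ℙ_ρ started from a density matrix ρ with p_0^{(j)} = Tr(P_j ρ) > 0. The processes p_n^{(j)} = Tr(P_j ρ_n) form a bounded martingale converging a.s. and in L¹ to a limit p_∞^{(j)}; define the tilted probability measure ℙ_ρ^{(j)} = (p_∞^{(j)} / p_0^{(j)}) ℙ_ρ (equivalently, its restriction to F_n has density p_n^{(j)}/p_0^{(j)} with respect to ℙ_ρ). Then under ℙ_ρ^{(j)}, the process ( ρ_n^{(j)} / Tr(ρ_n^{(j)}),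 X_n )_{n≥0}, where ρ_n^{(j)} = P_j ρ_n P_j, is the quantum trajectory process associated to the family of operators A_i^{(j)} = A_i P_j on E_j, started from the state ρ^{(j)}/Tr(ρ^{(j)}): that is, for every n and every i ∈ {1,…,2d}, ℙ_ρ^{(j)}(X_{n+1} = X_n + e_i | F_n) = Tr( A_i^{(j)} ρ̃_n^{(j)} A_i^{(j)*} ) where ρ̃_n^{(j)} = ρ_n^{(j)}/Tr(ρ_n^{(j)}), and on that event ρ̃_{n+1}^{(j)} = A_i^{(j)} ρ̃_n^{(j)} A_i^{(j)*} / Tr( A_i^{(j)} ρ̃_n^{(j)} A_i^{(j)*} ) almost surely. -/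
open MeasureTheory Filter Matrix Finset
open scoped ComplexOrder

noncomputable section

/-!
The tilted measure is Doob's `h`-transform of `μ` by the density process `Tr (P ρ_n) / Tr (P ρ_0)`,
which is closed by `pinf / Tr (P ρ_0)`. By Bayes' formula, the tilted probability of a jump in
direction `i` is its original probability `Tr (A_i ρ_n A_i*)` times the ratio of the new weight
`Tr (P ρ_{n+1})` on that jump to the old weight `Tr (P ρ_n)`. Since `P` commutes with `A_i`, this
product equals `Tr (P A_i ρ_n A_i* P) / Tr (P ρ_n P)`, the jump probability of the restricted walk.
-/

section TraceNormalization

variable {n : Type*} [Fintype n]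

/-- The state `M / Tr M` obtained from a positive semidefinite matrix `M`. When `Tr M = 0` this is
the zero matrix. -/
def traceNormalize (M : Matrix n n ℂ) : Matrix n n ℂ := M.trace⁻¹ • M

theorem trace_eq_re_of_posSemidef {M : Matrix n n ℂ} (hM : M.PosSemidef) :
    M.trace = M.trace.re :=
  Complex.eq_re_of_ofReal_le (r := 0) hM.trace_nonneg

theorem trace_re_nonneg_of_posSemidef {M : Matrix n n ℂ} (hM : M.PosSemidef) : 0 ≤ M.trace.re :=
  (Complex.nonneg_iff.1 hM.trace_nonneg).1

theorem trace_smul_traceNormalize {M : Matrix n n ℂ} (hM : M.PosSemidef) :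
    M.trace • traceNormalize M = M := by
  by_cases htr : M.trace = 0
  · rw [htr, zero_smul, hM.trace_eq_zero_iff.1 htr]
  · rw [traceNormalize, smul_inv_smul₀ htr]

theorem posSemidef_traceNormalize {M : Matrix n n ℂ} (hM : M.PosSemidef) :
    (traceNormalize M).PosSemidef :=
  hM.smul (inv_nonneg_of_nonneg hM.trace_nonneg)

theorem trace_traceNormalize {M : Matrix n n ℂ} (htr : M.trace ≠ 0) :
    (traceNormalize M).trace = 1 := by
  rw [traceNormalize, trace_smul, smul_eq_mul, inv_mul_cancel₀ htr]

theorem traceNormalize_smul {a : ℂ} (ha : a ≠ 0) (M : Matrix n n ℂ) :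
    traceNormalize (a • M) = traceNormalize M := by
  rw [traceNormalize, traceNormalize, trace_smul, smul_smul, smul_eq_mul,
    _root_.mul_inv_rev, mul_assoc, inv_mul_cancel₀ ha, mul_one]

theorem traceNormalize_conj_traceNormalize {M : Matrix n n ℂ} (hM : M.PosSemidef)
    (B : Matrix n n ℂ) :
    traceNormalize (B * traceNormalize M * Bᴴ) = traceNormalize (B * M * Bᴴ) := by
  by_cases htr : M.trace = 0
  · rw [hM.trace_eq_zero_iff.1 htr, traceNormalize.eq_def 0, smul_zero]
  · rw [traceNormalize.eq_def M, Matrix.mul_smul, Matrix.smul_mul,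
      traceNormalize_smul (inv_ne_zero htr)]

theorem re_trace_mul_re_trace_conj_traceNormalize {M : Matrix n n ℂ} (hM : M.PosSemidef)
    (B : Matrix n n ℂ) :
    M.trace.re * (B * traceNormalize M * Bᴴ).trace.re = (B * M * Bᴴ).trace.re := by
  rw [← Complex.re_ofReal_mul, ← trace_eq_re_of_posSemidef hM, ← smul_eq_mul, ← trace_smul,
    ← Matrix.smul_mul, ← Matrix.mul_smul, trace_smul_traceNormalize hM]

end TraceNormalization

section Projections

variable {n : Type*} [Fintype n] {P : Matrix n n ℂ}

theorem trace_conj_isStarProjection (hP : IsStarProjection P) (M : Matrix n n ℂ) :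
    (P * M * Pᴴ).trace = (P * M).trace := by
  rw [← star_eq_conjTranspose, hP.isSelfAdjoint.star_eq, trace_mul_comm, ← Matrix.mul_assoc,
    hP.isIdempotentElem.eq]

theorem re_trace_mul_nonneg_of_isStarProjection (hP : IsStarProjection P) {M : Matrix n n ℂ}
    (hM : M.PosSemidef) : 0 ≤ (P * M).trace.re := by
  rw [← trace_conj_isStarProjection hP]
  exact trace_re_nonneg_of_posSemidef (hM.mul_mul_conjTranspose_same P)

theorem re_trace_mul_le_of_isStarProjection (hP : IsStarProjection P) {M : Matrix n n ℂ}
    (hM : M.PosSemidef) : (P * M).trace.re ≤ M.trace.re := by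
  classical
  have hcompl := re_trace_mul_nonneg_of_isStarProjection hP.one_sub hM
  rwa [Matrix.sub_mul, Matrix.one_mul, trace_sub, Complex.sub_re, sub_nonneg] at hcompl

theorem conj_restrict_eq_restrict_conj (hP : IsStarProjection P) {A : Matrix n n ℂ}
    (hPA : Commute P A) (M : Matrix n n ℂ) :
    A * P * (P * M * Pᴴ) * (A * P)ᴴ = P * (A * M * Aᴴ) * Pᴴ := by
  have hAPP : A * P * P = P * A := by
    rw [Matrix.mul_assoc, hP.isIdempotentElem.eq, hPA.eq]
  calc A * P * (P * M * Pᴴ) * (A * P)ᴴ = (A * P * P) * M * (A * P * P)ᴴ := by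
        simp only [conjTranspose_mul, Matrix.mul_assoc]
    _ = P * (A * M * Aᴴ) * Pᴴ := by
        rw [hAPP]; simp only [conjTranspose_mul, Matrix.mul_assoc]

/-- The state `P M P / Tr (P M P)` to which `M` is reduced on the range of the projection `P`. -/
def restrictState (P M : Matrix n n ℂ) : Matrix n n ℂ := traceNormalize (P * M * P)

theorem restrictState_eq_conj (hP : IsStarProjection P) (M : Matrix n n ℂ) :
    restrictState P M = traceNormalize (P * M * Pᴴ) := by
  rw [restrictState, ← star_eq_conjTranspose, hP.isSelfAdjoint.star_eq]

theorem posSemidef_restrictState (hP : IsStarProjection P) {M : Matrix n n ℂ}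
    (hM : M.PosSemidef) : (restrictState P M).PosSemidef := by
  rw [restrictState_eq_conj hP]
  exact posSemidef_traceNormalize (hM.mul_mul_conjTranspose_same P)

theorem trace_restrictState (hP : IsStarProjection P) {M : Matrix n n ℂ}
    (htr : (P * M).trace ≠ 0) : (restrictState P M).trace = 1 := by
  rw [restrictState_eq_conj hP, trace_traceNormalize]
  rwa [trace_conj_isStarProjection hP]

theorem restrictState_traceNormalize_conj (hP : IsStarProjection P) {A : Matrix n n ℂ}
    (hPA : Commute P A) {M : Matrix n n ℂ} (hM : M.PosSemidef) :
    restrictState P (traceNormalize (A * M * Aᴴ)) =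
      traceNormalize (A * P * restrictState P M * (A * P)ᴴ) := by
  rw [restrictState_eq_conj hP, restrictState_eq_conj hP,
    traceNormalize_conj_traceNormalize (hM.mul_mul_conjTranspose_same A),
    traceNormalize_conj_traceNormalize (hM.mul_mul_conjTranspose_same P),
    conj_restrict_eq_restrict_conj hP hPA]

theorem re_trace_mul_mul_re_trace_conj_restrictState (hP : IsStarProjection P) {A : Matrix n n ℂ}
    (hPA : Commute P A) {M : Matrix n n ℂ} (hM : M.PosSemidef) :
    (P * M).trace.re * (A * P * restrictState P M * (A * P)ᴴ).trace.re =
      (A * M * Aᴴ).trace.re * (P * traceNormalize (A * M * Aᴴ)).trace.re := by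
  rw [← trace_conj_isStarProjection hP, ← trace_conj_isStarProjection hP, restrictState_eq_conj hP,
    re_trace_mul_re_trace_conj_traceNormalize (hM.mul_mul_conjTranspose_same A),
    re_trace_mul_re_trace_conj_traceNormalize (hM.mul_mul_conjTranspose_same P),
    conj_restrict_eq_restrict_conj hP hPA]

end Projections

section ChangeOfMeasure

variable {Ω : Type*} {m m' mΩ : MeasurableSpace Ω} {μ : Measure Ω} {Z : Ω → ℝ}

theorem integrable_withDensity_ofReal_iff (hZ : AEMeasurable Z μ) (hZ0 : 0 ≤ᵐ[μ] Z) {f : Ω → ℝ} :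
    Integrable f (μ.withDensity fun ω => ENNReal.ofReal (Z ω)) ↔ Integrable (f * Z) μ := by
  rw [integrable_withDensity_iff_integrable_smul₀' hZ.ennreal_ofReal
    (ae_of_all _ fun _ => ENNReal.ofReal_lt_top)]
  refine integrable_congr ?_
  filter_upwards [hZ0] with ω hω
  rw [ENNReal.toReal_ofReal hω, smul_eq_mul, mul_comm, Pi.mul_apply]

theorem setIntegral_withDensity_ofReal (hZ : AEMeasurable Z μ) (hZ0 : 0 ≤ᵐ[μ] Z) (f : Ω → ℝ)
    {s : Set Ω} (hs : MeasurableSet s) :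
    ∫ ω in s, f ω ∂(μ.withDensity fun ω => ENNReal.ofReal (Z ω)) = ∫ ω in s, (f * Z) ω ∂μ := by
  rw [setIntegral_withDensity_eq_setIntegral_toReal_smul₀ hZ.ennreal_ofReal.restrict
    (ae_of_all _ fun _ => ENNReal.ofReal_lt_top) _ hs]
  refine integral_congr_ae (ae_restrict_of_ae ?_)
  filter_upwards [hZ0] with ω hω
  rw [ENNReal.toReal_ofReal hω, smul_eq_mul, mul_comm, Pi.mul_apply]

theorem isProbabilityMeasure_withDensity_ofReal (hZ : Integrable Z μ) (hZ0 : 0 ≤ᵐ[μ] Z)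
    (hZ1 : ∫ ω, Z ω ∂μ = 1) :
    IsProbabilityMeasure (μ.withDensity fun ω => ENNReal.ofReal (Z ω)) := by
  refine ⟨?_⟩
  rw [withDensity_apply _ .univ, Measure.restrict_univ,
    ← ofReal_integral_eq_lintegral_ofReal hZ hZ0, hZ1, ENNReal.ofReal_one]

theorem ae_withDensity_condExp_ne_zero (hm : m ≤ mΩ) [SigmaFinite (μ.trim hm)]
    (hZ : Integrable Z μ) (hZ0 : 0 ≤ᵐ[μ] Z) :
    ∀ᵐ ω ∂(μ.withDensity fun ω => ENNReal.ofReal (Z ω)), μ[Z | m] ω ≠ 0 := by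
  have hs : MeasurableSet[m] {ω | μ[Z | m] ω = 0} :=
    stronglyMeasurable_condExp.measurable (measurableSet_singleton 0)
  have hzero : ∫ ω in {ω | μ[Z | m] ω = 0}, Z ω ∂μ = 0 := by
    rw [← setIntegral_condExp hm hZ hs]
    exact setIntegral_eq_zero_of_forall_eq_zero fun _ hω => hω
  rw [ae_iff]
  simp only [ne_eq, not_not]
  rw [withDensity_apply _ (hm _ hs),
    ← ofReal_integral_eq_lintegral_ofReal hZ.integrableOn (ae_restrict_of_ae hZ0), hzero,
    ENNReal.ofReal_zero]

/-- Bayes' formula for conditional expectations. -/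
theorem condExp_withDensity_mul_condExp (hm : m ≤ mΩ) [SigmaFinite (μ.trim hm)]
    (hZ : Integrable Z μ) (hZ0 : 0 ≤ᵐ[μ] Z) {f : Ω → ℝ} (hfZ : Integrable (f * Z) μ) :
    (μ.withDensity fun ω => ENNReal.ofReal (Z ω))[f | m] * μ[Z | m] =ᵐ[μ] μ[f * Z | m] := by
  set ν := μ.withDensity fun ω => ENNReal.ofReal (Z ω)
  have : IsFiniteMeasure ν := isFiniteMeasure_withDensity_ofReal hZ.2
  have hZm : AEMeasurable Z μ := hZ.aemeasurable
  have hf : Integrable f ν := (integrable_withDensity_ofReal_iff hZm hZ0).2 hfZ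
  have hνZ : Integrable (ν[f | m] * Z) μ :=
    (integrable_withDensity_ofReal_iff hZm hZ0).1 integrable_condExp
  have hpull : μ[ν[f | m] * Z | m] =ᵐ[μ] ν[f | m] * μ[Z | m] :=
    condExp_mul_of_stronglyMeasurable_left stronglyMeasurable_condExp hνZ hZ
  refine hpull.symm.trans (ae_eq_condExp_of_forall_setIntegral_eq hm hfZ
    (fun _ _ _ => integrable_condExp.integrableOn) (fun s hs _ => ?_)
    stronglyMeasurable_condExp.aestronglyMeasurable)
  calc ∫ ω in s, μ[ν[f | m] * Z | m] ω ∂μ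
      = ∫ ω in s, (ν[f | m] * Z) ω ∂μ := setIntegral_condExp hm hνZ hs
    _ = ∫ ω in s, ν[f | m] ω ∂ν := (setIntegral_withDensity_ofReal hZm hZ0 _ (hm _ hs)).symm
    _ = ∫ ω in s, f ω ∂ν := setIntegral_condExp hm hf hs
    _ = ∫ ω in s, (f * Z) ω ∂μ := setIntegral_withDensity_ofReal hZm hZ0 _ (hm _ hs)

/-- One step of Doob's `h`-transform: `r` predicts, with the information in `m`, the value that the
density process takes at the later time `m'` wherever `f` does not vanish. -/
theorem condExp_withDensity_mul_condExp_of_mul_eq (hmm' : m ≤ m') (hm' : m' ≤ mΩ)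
    [SigmaFinite (μ.trim (hmm'.trans hm'))] (hZ : Integrable Z μ) (hZ0 : 0 ≤ᵐ[μ] Z) {f r : Ω → ℝ}
    (hf : Integrable f μ) (hfm : StronglyMeasurable[m'] f) (hfZ : Integrable (f * Z) μ)
    (hr : StronglyMeasurable[m] r) (hfr : f * μ[Z | m'] =ᵐ[μ] f * r) :
    (μ.withDensity fun ω => ENNReal.ofReal (Z ω))[f | m] * μ[Z | m] =ᵐ[μ] μ[f | m] * r := by
  have : SigmaFinite (μ.trim hm') := sigmaFiniteTrim_mono hm' hmm'
  have hpull : μ[f * Z | m'] =ᵐ[μ] f * r :=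
    (condExp_mul_of_stronglyMeasurable_left hfm hfZ hZ).trans hfr
  calc (μ.withDensity fun ω => ENNReal.ofReal (Z ω))[f | m] * μ[Z | m]
      =ᵐ[μ] μ[f * Z | m] := condExp_withDensity_mul_condExp (hmm'.trans hm') hZ hZ0 hfZ
    _ =ᵐ[μ] μ[μ[f * Z | m'] | m] := (condExp_condExp_of_le hmm' hm').symm
    _ =ᵐ[μ] μ[f * r | m] := condExp_congr_ae hpull
    _ =ᵐ[μ] μ[f | m] * r :=
      condExp_mul_of_stronglyMeasurable_right hr (integrable_condExp.congr hpull) hf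

end ChangeOfMeasure

section MartingaleLimit

variable {Ω E : Type*} {mΩ : MeasurableSpace Ω} {μ : Measure Ω}

theorem integrable_of_tendsto_ae_of_norm_le [NormedAddCommGroup E] [IsFiniteMeasure μ]
    {f : ℕ → Ω → E} {g : Ω → E} {R : ℝ} (hfm : ∀ n, AEStronglyMeasurable (f n) μ)
    (hfR : ∀ n, ∀ᵐ ω ∂μ, ‖f n ω‖ ≤ R)
    (hlim : ∀ᵐ ω ∂μ, Tendsto (fun n => f n ω) atTop (nhds (g ω))) : Integrable g μ := by
  refine .of_bound (aestronglyMeasurable_of_tendsto_ae atTop hfm hlim) R ?_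
  filter_upwards [hlim, ae_all_iff.2 hfR] with ω hω hR
  exact le_of_tendsto' hω.norm hR

theorem martingale_ae_eq_condExp_of_tendsto_ae_of_norm_le [IsFiniteMeasure μ]
    {ℱ : Filtration ℕ mΩ} {f : ℕ → Ω → ℝ} {g : Ω → ℝ} {R : ℝ} (hf : Martingale f ℱ μ)
    (hfR : ∀ n, ∀ᵐ ω ∂μ, ‖f n ω‖ ≤ R)
    (hlim : ∀ᵐ ω ∂μ, Tendsto (fun n => f n ω) atTop (nhds (g ω))) (n : ℕ) :
    f n =ᵐ[μ] μ[g | ℱ n] := by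
  have hfm (k : ℕ) : AEStronglyMeasurable (f k) μ := (hf.integrable k).aestronglyMeasurable
  refine hf.eq_condExp_of_tendsto_eLpNorm (integrable_of_tendsto_ae_of_norm_le hfm hfR hlim) ?_ n
  simp only [eLpNorm_one_eq_lintegral_enorm, ← ofReal_norm, Pi.sub_apply]
  exact tendsto_lintegral_norm_of_dominated_convergence hfm
    (integrable_const R).hasFiniteIntegral hfR hlim

end MartingaleLimit

section Measurability

variable {k : ℕ}

instance instBorelSpaceMatrix : BorelSpace (Matrix (Fin k) (Fin k) ℂ) :=
  inferInstanceAs (BorelSpace (Fin k → Fin k → ℂ))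

theorem measurable_traceNormalize :
    Measurable (traceNormalize : Matrix (Fin k) (Fin k) ℂ → Matrix (Fin k) (Fin k) ℂ) := by
  have htrace : Measurable fun M : Matrix (Fin k) (Fin k) ℂ => M.trace⁻¹ :=
    (continuous_id.matrix_trace.measurable).inv
  refine measurable_pi_iff.2 fun i => measurable_pi_iff.2 fun j => ?_
  exact htrace.mul ((measurable_pi_apply j).comp (measurable_pi_apply i))

theorem measurable_restrictState (P : Matrix (Fin k) (Fin k) ℂ) : Measurable (restrictState P) :=
  measurable_traceNormalize.comp
    (Continuous.measurable (f := fun M => P * M * P) (by fun_prop))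

end Measurability

section Jumps

variable {Ω : Type*} {d : ℕ}

/-- The real-valued indicator function of the event that the walk `X` makes its step from time `n`
to time `n + 1` in direction `i`. -/
def jumpIndicator (X : ℕ → Ω → Fin d → ℤ) (n : ℕ) (i : Fin (2 * d)) (ω : Ω) : ℝ :=
  if X (n + 1) ω = X n ω + dir d i then 1 else 0

theorem norm_jumpIndicator_le_one (X : ℕ → Ω → Fin d → ℤ) (n : ℕ) (i : Fin (2 * d)) (ω : Ω) :
    ‖jumpIndicator X n i ω‖ ≤ 1 := by
  unfold jumpIndicator
  split_ifs <;> simp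

end Jumps

namespace IsQTraj

variable {k d : ℕ} {Ω : Type} {mΩ : MeasurableSpace Ω}
  {A : Fin (2 * d) → Matrix (Fin k) (Fin k) ℂ} {μ : Measure Ω} {ℱ : Filtration ℕ mΩ}
  {ρ : ℕ → Ω → Matrix (Fin k) (Fin k) ℂ} {X : ℕ → Ω → Fin d → ℤ}
  {P : Matrix (Fin k) (Fin k) ℂ} {Z : Ω → ℝ} {a : ℝ}

theorem stronglyMeasurable_jumpIndicator (h : IsQTraj A μ ℱ ρ X) (n : ℕ) (i : Fin (2 * d)) :
    StronglyMeasurable[ℱ (n + 1)] (jumpIndicator X n i) := by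
  have hX : Measurable[ℱ (n + 1)] (X n) := (h.adapted_X n).mono (ℱ.mono n.le_succ) le_rfl
  have htarget : Measurable[ℱ (n + 1)] fun ω => X n ω + dir d i :=
    (measurable_of_countable (· + dir d i)).comp hX
  exact .ite (measurableSet_eq_fun (h.adapted_X (n + 1)) htarget) stronglyMeasurable_const
    stronglyMeasurable_const

theorem ae_re_trace_mul_mem_Icc (h : IsQTraj A μ ℱ ρ X) (hP : IsStarProjection P) (n : ℕ) :
    ∀ᵐ ω ∂μ, (P * ρ n ω).trace.re ∈ Set.Icc 0 1 := by
  filter_upwards [h.density n] with ω hω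
  refine ⟨re_trace_mul_nonneg_of_isStarProjection hP hω.1, ?_⟩
  calc (P * ρ n ω).trace.re ≤ (ρ n ω).trace.re := re_trace_mul_le_of_isStarProjection hP hω.1
    _ = 1 := by rw [hω.2, Complex.one_re]

theorem stronglyMeasurable_re_trace_mul_traceNormalize_conj (h : IsQTraj A μ ℱ ρ X)
    (P B : Matrix (Fin k) (Fin k) ℂ) (n : ℕ) :
    StronglyMeasurable[ℱ n] fun ω => (P * traceNormalize (B * ρ n ω * Bᴴ)).trace.re := by
  have hconj : Measurable fun M => B * M * Bᴴ := Continuous.measurable (by fun_prop)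
  have hweight : Measurable fun M => (P * M).trace.re := Continuous.measurable (by fun_prop)
  exact (hweight.comp (measurable_traceNormalize.comp
    (hconj.comp (h.adapted_ρ n)))).stronglyMeasurable

theorem jumpIndicator_mul_condExp_succ (h : IsQTraj A μ ℱ ρ X) {n : ℕ}
    (hclosed : μ[Z | ℱ (n + 1)] =ᵐ[μ] fun ω => a * (P * ρ (n + 1) ω).trace.re)
    (i : Fin (2 * d)) :
    jumpIndicator X n i * μ[Z | ℱ (n + 1)] =ᵐ[μ] jumpIndicator X n i *
      fun ω => a * (P * traceNormalize (A i * ρ n ω * (A i)ᴴ)).trace.re := by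
  filter_upwards [hclosed, h.update n i] with ω hω hupdate
  by_cases hX : X (n + 1) ω = X n ω + dir d i
  · simp only [Pi.mul_apply, hω, hupdate hX, traceNormalize]
  · simp only [Pi.mul_apply, jumpIndicator, if_neg hX, zero_mul]

theorem condExp_withDensity_jumpIndicator [IsFiniteMeasure μ] (h : IsQTraj A μ ℱ ρ X)
    (hP : IsStarProjection P) {i : Fin (2 * d)} (hPA : Commute P (A i)) (hZ : Integrable Z μ)
    (hZ0 : 0 ≤ᵐ[μ] Z) (hclosed : ∀ n, μ[Z | ℱ n] =ᵐ[μ] fun ω => a * (P * ρ n ω).trace.re)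
    (n : ℕ) :
    (μ.withDensity fun ω => ENNReal.ofReal (Z ω))[jumpIndicator X n i | ℱ n]
      =ᵐ[μ.withDensity fun ω => ENNReal.ofReal (Z ω)]
        fun ω => (A i * P * restrictState P (ρ n ω) * (A i * P)ᴴ).trace.re := by
  have hjump := h.stronglyMeasurable_jumpIndicator n i
  have hjump_ae : AEStronglyMeasurable (jumpIndicator X n i) μ :=
    (hjump.mono (ℱ.le _)).aestronglyMeasurable
  have hjump_le : ∀ᵐ ω ∂μ, ‖jumpIndicator X n i ω‖ ≤ 1 :=
    ae_of_all _ (norm_jumpIndicator_le_one X n i)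
  have hbayes := condExp_withDensity_mul_condExp_of_mul_eq (ℱ.mono n.le_succ) (ℱ.le _) hZ hZ0
    (.of_bound hjump_ae 1 hjump_le) hjump (hZ.bdd_mul hjump_ae hjump_le)
    ((h.stronglyMeasurable_re_trace_mul_traceNormalize_conj P (A i) n).const_mul a)
    (h.jumpIndicator_mul_condExp_succ (hclosed (n + 1)) i)
  have hprob : μ[jumpIndicator X n i | ℱ n] =ᵐ[μ] _ := h.prob n i
  have hac := withDensity_absolutelyContinuous μ fun ω => ENNReal.ofReal (Z ω)
  filter_upwards [hac.ae_le hbayes, hac.ae_le hprob, hac.ae_le (hclosed n),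
    hac.ae_le (h.density n), ae_withDensity_condExp_ne_zero (ℱ.le n) hZ hZ0]
    with ω hbayes hprob hclosed hdensity hne
  refine mul_right_cancel₀ hne ?_
  rw [Pi.mul_apply, Pi.mul_apply, hprob] at hbayes
  rw [hbayes, hclosed]
  linear_combination -a * re_trace_mul_mul_re_trace_conj_restrictState hP hPA hdensity.1

theorem restrictState_withDensity [IsFiniteMeasure μ] (h : IsQTraj A μ ℱ ρ X)
    (hP : IsStarProjection P) (hPA : ∀ i, Commute P (A i)) (hZ : Integrable Z μ)
    (hZ0 : 0 ≤ᵐ[μ] Z) (hclosed : ∀ n, μ[Z | ℱ n] =ᵐ[μ] fun ω => a * (P * ρ n ω).trace.re) :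
    IsQTraj (fun i => A i * P) (μ.withDensity fun ω => ENNReal.ofReal (Z ω)) ℱ
      (fun n ω => restrictState P (ρ n ω)) X where
  density n := by
    have hac := withDensity_absolutelyContinuous μ fun ω => ENNReal.ofReal (Z ω)
    filter_upwards [hac.ae_le (h.density n), hac.ae_le (hclosed n),
      ae_withDensity_condExp_ne_zero (ℱ.le n) hZ hZ0] with ω hdensity hclosed hne
    refine ⟨posSemidef_restrictState hP hdensity.1, trace_restrictState hP fun htr => hne ?_⟩
    rw [hclosed, htr, Complex.zero_re, mul_zero]
  adapted_ρ n := (measurable_restrictState P).comp (h.adapted_ρ n)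
  adapted_X := h.adapted_X
  prob n i := h.condExp_withDensity_jumpIndicator hP (hPA i) hZ hZ0 hclosed n
  update n i := by
    refine (withDensity_absolutelyContinuous _ _).ae_le ?_
    filter_upwards [h.density n, h.update n i] with ω hdensity hupdate hX
    rw [hupdate hX]
    exact restrictState_traceNormalize_conj hP (hPA i) hdensity.1

theorem limit_re_trace_mul_nonneg (h : IsQTraj A μ ℱ ρ X) (hP : IsStarProjection P) {pinf : Ω → ℝ}
    (hlim : ∀ᵐ ω ∂μ, Tendsto (fun n => (P * ρ n ω).trace.re) atTop (nhds (pinf ω))) :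
    0 ≤ᵐ[μ] pinf := by
  filter_upwards [hlim, ae_all_iff.2 (h.ae_re_trace_mul_mem_Icc hP)] with ω hω hmem
  exact ge_of_tendsto' hω fun n => (hmem n).1

theorem ae_norm_re_trace_mul_le_one (h : IsQTraj A μ ℱ ρ X) (hP : IsStarProjection P) (n : ℕ) :
    ∀ᵐ ω ∂μ, ‖(P * ρ n ω).trace.re‖ ≤ 1 := by
  filter_upwards [h.ae_re_trace_mul_mem_Icc hP n] with ω hω
  rw [Real.norm_of_nonneg hω.1]
  exact hω.2

theorem condExp_limit_re_trace_mul_div [IsFiniteMeasure μ] (h : IsQTraj A μ ℱ ρ X)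
    (hP : IsStarProjection P) {pinf : Ω → ℝ}
    (hmart : Martingale (fun n ω => (P * ρ n ω).trace.re) ℱ μ)
    (hlim : ∀ᵐ ω ∂μ, Tendsto (fun n => (P * ρ n ω).trace.re) atTop (nhds (pinf ω)))
    (c : ℝ) (n : ℕ) :
    μ[fun ω => pinf ω / c | ℱ n] =ᵐ[μ] fun ω => c⁻¹ * (P * ρ n ω).trace.re := by
  have hscale : (fun ω => pinf ω / c) = c⁻¹ • pinf := by
    ext ω
    rw [Pi.smul_apply, smul_eq_mul, div_eq_inv_mul]
  rw [hscale]
  filter_upwards [condExp_smul c⁻¹ pinf (ℱ n), martingale_ae_eq_condExp_of_tendsto_ae_of_norm_le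
    hmart (h.ae_norm_re_trace_mul_le_one hP) hlim n] with ω hsmul hclosed
  rw [hsmul, Pi.smul_apply, smul_eq_mul, hclosed]

end IsQTraj

theorem stmt16_general {k d : ℕ} {A : Fin (2 * d) → Matrix (Fin k) (Fin k) ℂ}
    {P : Matrix (Fin k) (Fin k) ℂ} (hP : IsStarProjection P) (hPA : ∀ i, Commute P (A i))
    {Ω : Type} {mΩ : MeasurableSpace Ω} {μ : Measure Ω} [IsProbabilityMeasure μ]
    {ℱ : Filtration ℕ mΩ} {ρ : ℕ → Ω → Matrix (Fin k) (Fin k) ℂ} {X : ℕ → Ω → Fin d → ℤ}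
    (hQT : IsQTraj A μ ℱ ρ X) {ρ₀ : Matrix (Fin k) (Fin k) ℂ} (hinit : ∀ ω, ρ 0 ω = ρ₀)
    (hp₀ : 0 < (P * ρ₀).trace.re) {pinf : Ω → ℝ}
    (hmart : Martingale (fun n ω => (P * ρ n ω).trace.re) ℱ μ)
    (hlim : ∀ᵐ ω ∂μ, Tendsto (fun n => (P * ρ n ω).trace.re) atTop (nhds (pinf ω)))
    {μP : Measure Ω}
    (hμP : μP = μ.withDensity fun ω => ENNReal.ofReal (pinf ω / (P * ρ₀).trace.re)) :
    IsProbabilityMeasure μP ∧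
      IsQTraj (fun i => A i * P) μP ℱ (fun n ω => restrictState P (ρ n ω)) X := by
  subst hμP
  have hZ : Integrable (fun ω => pinf ω / (P * ρ₀).trace.re) μ :=
    (integrable_of_tendsto_ae_of_norm_le (fun n => (hmart.integrable n).1)
      (hQT.ae_norm_re_trace_mul_le_one hP) hlim).div_const _
  have hZ0 : 0 ≤ᵐ[μ] fun ω => pinf ω / (P * ρ₀).trace.re := by
    filter_upwards [hQT.limit_re_trace_mul_nonneg hP hlim] with ω hω using div_nonneg hω hp₀.le
  have hclosed := hQT.condExp_limit_re_trace_mul_div hP hmart hlim (P * ρ₀).trace.re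
  have hZ1 : ∫ ω, pinf ω / (P * ρ₀).trace.re ∂μ = 1 := by
    rw [← integral_condExp (ℱ.le 0), integral_congr_ae (hclosed 0)]
    simp only [hinit, inv_mul_cancel₀ hp₀.ne', integral_const, probReal_univ, one_smul]
  exact ⟨isProbabilityMeasure_withDensity_ofReal hZ hZ0 hZ1,
    hQT.restrictState_withDensity hP hPA hZ hZ0 hclosed⟩

/-- (Restriction under the h-process.) Under (H1'), if
`ℙ_ρ^{(j)} = (p_∞^{(j)}/p_0^{(j)}) ℙ_ρ` is the tilted measure associated to the bounded
martingale `p_n^{(j)} = Tr(P_j ρ_n)` (converging a.s. and in `L¹` to `p_∞^{(j)}`), then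
under `ℙ_ρ^{(j)}` the process `(ρ_n^{(j)}/Tr(ρ_n^{(j)}), X_n)`, with
`ρ_n^{(j)} = P_j ρ_n P_j`, is the quantum trajectory process associated to the operators
`A_i^{(j)} = A_i P_j`, started from `ρ^{(j)}/Tr(ρ^{(j)})`. -/
theorem stmt16 {k d N : ℕ} (hd : 1 ≤ d)
    (A : Fin (2 * d) → Matrix (Fin k) (Fin k) ℂ)
    (hA : ∑ j, (A j)ᴴ * A j = 1)
    (P : Fin N → Matrix (Fin k) (Fin k) ℂ)
    (hsa : ∀ j, (P j)ᴴ = P j) (hidem : ∀ j, P j * P j = P j)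
    (horth : ∀ j j', j ≠ j' → P j * P j' = 0)
    (hsum : ∑ j, P j = 1)
    (hcomm : ∀ (i : Fin (2 * d)) (j : Fin N), P j * A i = A i * P j)
    {Ω : Type} {mΩ : MeasurableSpace Ω} (μ : Measure Ω) [IsProbabilityMeasure μ]
    (ℱ : Filtration ℕ mΩ)
    (ρ : ℕ → Ω → Matrix (Fin k) (Fin k) ℂ) (X : ℕ → Ω → Fin d → ℤ)
    (hQT : IsQTraj A μ ℱ ρ X)
    (ρ₀ : Matrix (Fin k) (Fin k) ℂ) (hρ₀ : IsDensity ρ₀)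
    (hinit : ∀ ω, ρ 0 ω = ρ₀)
    (j : Fin N) (hp₀ : 0 < ((P j * ρ₀).trace).re)
    (pinf : Ω → ℝ)
    (hmart : Martingale (fun n ω => ((P j * ρ n ω).trace).re) ℱ μ)
    (has : ∀ᵐ ω ∂μ, Tendsto (fun n => ((P j * ρ n ω).trace).re) atTop (nhds (pinf ω)))
    (hL1 : Tendsto (fun n => ∫ ω, |((P j * ρ n ω).trace).re - pinf ω| ∂μ) atTop (nhds 0))
    (μj : Measure Ω)
    (hμj : μj = μ.withDensity (fun ω => ENNReal.ofReal (pinf ω / ((P j * ρ₀).trace).re)))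
    (ρt : ℕ → Ω → Matrix (Fin k) (Fin k) ℂ)
    (hρt : ∀ n ω, ρt n ω = ((P j * ρ n ω * P j).trace)⁻¹ • (P j * ρ n ω * P j)) :
    IsProbabilityMeasure μj ∧
    (∀ ω, ρt 0 ω = ((P j * ρ₀ * P j).trace)⁻¹ • (P j * ρ₀ * P j)) ∧
    (∀ (n : ℕ) (i : Fin (2 * d)),
      μj[(fun ω => if X (n + 1) ω = X n ω + dir d i then (1 : ℝ) else 0) | ℱ n]
        =ᵐ[μj] fun ω =>
          (((A i * P j) * ρt n ω * (A i * P j)ᴴ).trace).re) ∧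
    (∀ (n : ℕ) (i : Fin (2 * d)), ∀ᵐ ω ∂μj,
      X (n + 1) ω = X n ω + dir d i →
        ρt (n + 1) ω =
          (((A i * P j) * ρt n ω * (A i * P j)ᴴ).trace)⁻¹ •
            ((A i * P j) * ρt n ω * (A i * P j)ᴴ)) := by
  obtain rfl : ρt = fun n ω => restrictState (P j) (ρ n ω) := funext₂ hρt
  obtain ⟨hprob, htraj⟩ := stmt16_general ⟨hidem j, hsa j⟩ (hcomm · j) hQT hinit hp₀ hmart has hμj
  exact ⟨hprob, fun ω => by simp only [hinit, restrictState, traceNormalize], htraj.prob,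
    htraj.update⟩
end
end
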